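/- arXiv:1605.00773 — 4 statements merged into one kernel-verified Lean document; each statement's English description precedes it below -/
import Mathlib

section
/- For every β > 0 there exists t_1 such that every 3-graph H on t ≥ t_1 vertices with 3 | t and δ(H) ≥ (5/9 + β)·C(t−1,2) contains a perfect matching. -/
open Finset

namespace PMx

def mat (a b c d e f g h i : Bool) : Fin 3 → Fin 3 → Bool := ![![a,b,c],![d,e,f],![g,h,i]]

lemma mat_eq (t : Fin 3 → Fin 3 → Bool) :
    t = mat (t 0 0) (t 0 1) (t 0 2) (t 1 0) (t 1 1) (t 1 2) (t 2 0) (t 2 1) (t 2 2) := by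
  funext i j; fin_cases i <;> fin_cases j <;> rfl

def cnt (t : Fin 3 → Fin 3 → Bool) : ℕ :=
  (t 0 0).toNat + (t 0 1).toNat + (t 0 2).toNat + (t 1 0).toNat + (t 1 1).toNat + (t 1 2).toNat
    + (t 2 0).toNat + (t 2 1).toNat + (t 2 2).toNat

def pm (t : Fin 3 → Fin 3 → Bool) : Bool :=
  (t 0 0 && t 1 1 && t 2 2) || (t 0 0 && t 1 2 && t 2 1) || (t 0 1 && t 1 0 && t 2 2) ||
  (t 0 1 && t 1 2 && t 2 0) || (t 0 2 && t 1 0 && t 2 1) || (t 0 2 && t 1 1 && t 2 0)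

lemma all_mat (P : (Fin 3 → Fin 3 → Bool) → Prop)
    (h : ∀ a b c d e f g h i : Bool, P (mat a b c d e f g h i)) : ∀ t, P t := by
  intro t; rw [mat_eq t]; apply h

set_option maxRecDepth 100000 in
lemma comb1 : ∀ t, pm t = false → cnt t ≤ 6 := by
  apply all_mat; decide +kernel

set_option maxRecDepth 100000 in
lemma comb2 : ∀ t, pm t = false → 6 ≤ cnt t →
    (∃ a, ∀ i, i ≠ a → ∀ j, t i j = true) ∨ (∃ b, ∀ j, j ≠ b → ∀ i, t i j = true) := by
  apply all_mat; decide +kernel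

set_option maxRecDepth 100000 in
/-- two-matching -/
lemma comb3 : ∀ t, 5 ≤ cnt t → ∃ f f' f'' g g' g'', [f, f', f''].Nodup ∧ [g, g', g''].Nodup ∧
    t f g = true ∧ t f' g' = true := by
  apply all_mat; decide +kernel

lemma comb4 : ∀ t, 5 ≤ cnt t → ∃ f g, t f g = true := by
  apply all_mat; decide +kernel

set_option maxRecDepth 100000 in
lemma comb5 : ∀ t, 5 ≤ cnt t → ∀ a b : Fin 3, (∃ g, g ≠ b ∧ t a g = true) ∨
   (∃ f, f ≠ a ∧ t f b = true) ∨ (t a b = true ∧ ∃ f g, f ≠ a ∧ g ≠ b ∧ t f g = true) := by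
  apply all_mat; decide +kernel

lemma pm_spec : ∀ t, pm t = true → ∃ a b c : Fin 3, [a,b,c].Nodup ∧ t 0 a = true ∧ t 1 b = true ∧
    t 2 c = true := by
  apply all_mat; decide +kernel

abbrev F9 := Fin 3 × Fin 3

def Good (t : F9 → F9 → Prop) : Prop := ∃ p0 q0 p1 q1 p2 q2 p3 q3 : F9,
  [p0, q0, p1, q1, p2, q2, p3, q3].Nodup ∧ t p0 q0 ∧ t p1 q1 ∧ t p2 q2 ∧ t p3 q3

lemma pick2 : ∀ a b : Fin 3, ∃ e e', e ≠ a ∧ e' ≠ b ∧ e ≠ e' := by decide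
lemma pick1 : ∀ a b : Fin 3, ∃ e, e ≠ a ∧ e ≠ b := by decide
lemma others : ∀ a : Fin 3, ∃ e e', e ≠ a ∧ e' ≠ a ∧ e ≠ e' := by decide

lemma comb (t : F9 → F9 → Prop)
    (r01 r02 r12 : Fin 3 → Fin 3 → Bool)
    (h01 : ∀ i j, r01 i j = true → t (0,i) (1,j))
    (h02 : ∀ i j, r02 i j = true → t (0,i) (2,j))
    (h12 : ∀ i j, r12 i j = true → t (1,i) (2,j))
    (p01 : pm r01 = false) (p02 : pm r02 = false)
    (c01 : 6 ≤ cnt r01) (c02 : 6 ≤ cnt r02) (c12 : 5 ≤ cnt r12) : Good t := by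
  rcases comb2 _ p01 c01 with ⟨a, ha⟩ | ⟨a, ha⟩ <;> rcases comb2 _ p02 c02 with ⟨b, hb⟩ | ⟨b, hb⟩
  · obtain ⟨e, e', he, he', hee⟩ := pick2 a b
    obtain ⟨f, f', f'', g, g', g'', hf, hg, h1, h2⟩ := comb3 _ c12
    refine ⟨(0,e), (1,f''), (0,e'), (2,g''), (1,f), (2,g), (1,f'), (2,g'), ?_,
      h01 _ _ (ha _ he _), h02 _ _ (hb _ he' _), h12 _ _ h1, h12 _ _ h2⟩
    simp at hf hg ⊢
    grind
  · obtain ⟨f, g, h1⟩ := comb4 _ c12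
    obtain ⟨g', hg1, hg2⟩ := pick1 b g
    obtain ⟨e, e', he, he', hee⟩ := others a
    obtain ⟨f', f'', hf, hf', hff⟩ := others f
    refine ⟨(0,a), (2,g'), (0,e), (1,f'), (0,e'), (1,f''), (1,f), (2,g), ?_,
      h02 _ _ (hb _ hg1 _), h01 _ _ (ha _ he _), h01 _ _ (ha _ he' _), h12 _ _ h1⟩
    simp
    grind
  · obtain ⟨f, g, h1⟩ := comb4 _ c12
    obtain ⟨f', hf1, hf2⟩ := pick1 a f
    obtain ⟨e, e', he, he', hee⟩ := others b
    obtain ⟨g', g'', hg, hg', hgg⟩ := others g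
    refine ⟨(0,b), (1,f'), (0,e), (2,g'), (0,e'), (2,g''), (1,f), (2,g), ?_,
      h01 _ _ (ha _ hf1 _), h02 _ _ (hb _ he _), h02 _ _ (hb _ he' _), h12 _ _ h1⟩
    simp
    grind
  · rcases comb5 _ c12 a b with ⟨g, hg, h1⟩ | ⟨f, hf, h1⟩ | ⟨h1, f, g, hf, hg, h2⟩
    · obtain ⟨g', hg1, hg2⟩ := pick1 b g
      obtain ⟨f', f'', hf, hf', hff⟩ := others a
      refine ⟨(1,a), (2,g), (0,0), (2,g'), (0,1), (1,f'), (0,2), (1,f''), ?_,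
        h12 _ _ h1, h02 _ _ (hb _ hg1 _), h01 _ _ (ha _ hf _), h01 _ _ (ha _ hf' _)⟩
      simp
      grind
    · obtain ⟨f', hf1, hf2⟩ := pick1 a f
      obtain ⟨g', g'', hg, hg', hgg⟩ := others b
      refine ⟨(1,f), (2,b), (0,0), (1,f'), (0,1), (2,g'), (0,2), (2,g''), ?_,
        h12 _ _ h1, h01 _ _ (ha _ hf1 _), h02 _ _ (hb _ hg _), h02 _ _ (hb _ hg' _)⟩
      simp
      grind
    · obtain ⟨f', hf1, hf2⟩ := pick1 a f
      obtain ⟨g', hg1, hg2⟩ := pick1 b g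
      refine ⟨(1,a), (2,b), (1,f), (2,g), (0,0), (1,f'), (0,1), (2,g'), ?_,
        h12 _ _ h1, h12 _ _ h2, h01 _ _ (ha _ hf1 _), h02 _ _ (hb _ hg1 _)⟩
      simp
      grind

/-- The counting inequality. -/
lemma sum_le {ι : Type*} (M : Finset ι) (w : ι → ι → ℕ)
    (hsym : ∀ i ∈ M, ∀ j ∈ M, w i j = w j i) (h6 : ∀ i ∈ M, ∀ j ∈ M, w i j ≤ 6)
    (hc : ∀ i ∈ M, ∀ j ∈ M, ∀ k ∈ M, w i j = 6 → w i k = 6 → w j k ≤ 4) :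
    ∑ i ∈ M, ∑ j ∈ M, w i j ≤ 5 * #M ^ 2 := by
  classical
  set d : ι → ℕ := fun i => #{j ∈ M | w i j = 6} with hd
  set N : ι → ℕ := fun i => #{j ∈ M | w i j ≤ 4} with hN
  have hdN : ∀ i ∈ M, ∀ j ∈ M, w i j = 6 → d i ≤ N j := by
    intro i hi j hj hij
    apply Finset.card_le_card
    intro k hk
    simp only [mem_filter] at hk ⊢
    exact ⟨hk.1, hc i hi j hj k hk.1 hij hk.2⟩
  have hdpos : ∀ i ∈ M, ∀ j ∈ M, w i j = 6 → (0:ℝ) < d i := by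
    intro i hi j hj hij
    have : 0 < d i := Finset.card_pos.mpr ⟨j, by simp [hj, hij]⟩
    exact_mod_cast this
  have key : ∑ i ∈ M, (d i : ℝ) ≤ ∑ i ∈ M, (N i : ℝ) := by
    have e1 : ∑ i ∈ M, (d i : ℝ) = ∑ i ∈ M, ∑ j ∈ M, if w i j = 6 then (1:ℝ) else 0 := by
      apply Finset.sum_congr rfl; intro i _; simp [hd]
    have e2 : ∑ i ∈ M, ∑ j ∈ M, (if w i j = 6 then (1:ℝ) else 0) ≤
        ∑ i ∈ M, ∑ j ∈ M, (if w i j = 6 then ((d i : ℝ) / d j + (d j : ℝ) / d i) / 2 else 0) := by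
      apply Finset.sum_le_sum; intro i hi; apply Finset.sum_le_sum; intro j hj
      split_ifs with h
      · have h1 := hdpos i hi j hj h
        have h2 := hdpos j hj i hi (by rw [hsym j hj i hi]; exact h)
        rw [div_add_div _ _ h2.ne' h1.ne', div_div, le_div_iff₀ (by positivity)]
        nlinarith [sq_nonneg ((d i : ℝ) - d j)]
      · exact le_rfl
    have e3 : ∑ i ∈ M, ∑ j ∈ M, (if w i j = 6 then ((d i : ℝ) / d j) / 2 else 0) =
        ∑ i ∈ M, ∑ j ∈ M, (if w i j = 6 then ((d j : ℝ) / d i) / 2 else 0) := by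
      rw [Finset.sum_comm]
      apply Finset.sum_congr rfl; intro i hi; apply Finset.sum_congr rfl; intro j hj
      rw [hsym j hj i hi]
    have e4 : ∑ i ∈ M, ∑ j ∈ M,
        (if w i j = 6 then ((d i : ℝ) / d j + (d j : ℝ) / d i) / 2 else 0) =
        ∑ i ∈ M, ∑ j ∈ M, (if w i j = 6 then ((d j : ℝ) / d i) else 0) := by
      have : ∑ i ∈ M, ∑ j ∈ M,
        (if w i j = 6 then ((d i : ℝ) / d j + (d j : ℝ) / d i) / 2 else 0) =
        ∑ i ∈ M, ∑ j ∈ M, (if w i j = 6 then ((d i : ℝ) / d j) / 2 else 0) +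
        ∑ i ∈ M, ∑ j ∈ M, (if w i j = 6 then ((d j : ℝ) / d i) / 2 else 0) := by
        simp only [← Finset.sum_add_distrib]
        apply Finset.sum_congr rfl; intro i hi; apply Finset.sum_congr rfl; intro j hj
        split_ifs <;> ring
      rw [this, e3]
      simp only [← Finset.sum_add_distrib]
      apply Finset.sum_congr rfl; intro i hi; apply Finset.sum_congr rfl; intro j hj
      split_ifs <;> ring
    rw [e1]
    refine e2.trans (e4.le.trans ?_)
    apply Finset.sum_le_sum; intro i hi
    calc ∑ j ∈ M, (if w i j = 6 then ((d j : ℝ) / d i) else 0)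
        ≤ ∑ j ∈ M, (if w i j = 6 then ((N i : ℝ) / d i) else 0) := by
          apply Finset.sum_le_sum; intro j hj
          split_ifs with h
          · have := hdN j hj i hi (by rw [hsym j hj i hi]; exact h)
            gcongr
          · exact le_rfl
      _ = d i * ((N i : ℝ) / d i) := by
          rw [← Finset.sum_filter]; simp [hd]
      _ ≤ N i := by
          by_cases h : (d i : ℝ) = 0
          · rw [h]; simp
          · rw [mul_div_cancel₀ _ h]
  have key' : ∑ i ∈ M, d i ≤ ∑ i ∈ M, N i := by exact_mod_cast key
  have fin : ∑ i ∈ M, ∑ j ∈ M, w i j + ∑ i ∈ M, N i ≤ 5 * #M ^ 2 + ∑ i ∈ M, d i := by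
    have : ∀ i ∈ M, ∑ j ∈ M, w i j + N i ≤ 5 * #M + d i := by
      intro i hi
      simp only [hd, hN, Finset.card_filter]
      rw [mul_comm 5, ← smul_eq_mul (#M), ← Finset.sum_const, ← Finset.sum_add_distrib,
        ← Finset.sum_add_distrib]
      apply Finset.sum_le_sum; intro j hj
      have := h6 i hi j hj
      split_ifs <;> omega
    have := Finset.sum_le_sum this
    rw [Finset.sum_add_distrib, Finset.sum_add_distrib, Finset.sum_const, smul_eq_mul] at this
    nlinarith
  omega

end PMx

namespace PMx

section
variable {V : Type} [DecidableEq V]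

lemma exch {H M : Finset (Finset V)} {W : Finset V} (hH : ∀ e ∈ H, e.card = 3)
    (hMH : M ⊆ H) (hMd : (M : Set (Finset V)).Pairwise Disjoint) (hMW : ∀ e ∈ M, e ⊆ W)
    (hmax : ∀ N ⊆ H, (N : Set (Finset V)).Pairwise Disjoint → (∀ e ∈ N, e ⊆ W) → #N ≤ #M)
    (S : Finset (Finset V)) (hS : S ⊆ M) (k : ℕ) (e : Fin k → Finset V) (he : ∀ i, e i ∈ H)
    (hsub : ∀ i, e i ⊆ S.biUnion id ∪ (W \ M.biUnion id))
    (hd : ∀ i j, i ≠ j → Disjoint (e i) (e j)) : k ≤ #S := by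
  have hinj : Function.Injective e := by
    intro i j hij
    by_contra hne
    have := hd i j hne
    rw [hij, disjoint_self, Finset.bot_eq_empty] at this
    have h3 := hH _ (he j)
    rw [this] at h3; simp at h3
  have hdis : ∀ i, ∀ f ∈ M \ S, Disjoint (e i) f := by
    intro i f hf
    rw [Finset.mem_sdiff] at hf
    rw [Finset.disjoint_left]
    intro x hx hxf
    have := hsub i hx
    rw [mem_union, mem_biUnion, mem_sdiff, mem_biUnion] at this
    rcases this with ⟨g, hg, hxg⟩ | ⟨_, h⟩
    · have hne : g ≠ f := by rintro rfl; exact hf.2 hg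
      exact Finset.disjoint_left.mp (hMd (hS hg) hf.1 hne) hxg hxf
    · exact h ⟨f, hf.1, hxf⟩
  have hN : #((M \ S) ∪ univ.image e) ≤ #M := by
    apply hmax
    · intro f hf
      rw [mem_union, mem_sdiff, mem_image] at hf
      rcases hf with hf | ⟨i, _, rfl⟩
      · exact hMH hf.1
      · exact he i
    · intro f hf g hg hne
      rw [mem_coe, mem_union, mem_image] at hf hg
      rcases hf with hf | ⟨i, _, rfl⟩ <;> rcases hg with hg | ⟨j, _, rfl⟩
      · exact hMd (mem_sdiff.mp hf).1 (mem_sdiff.mp hg).1 hne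
      · exact (hdis _ _ hf).symm
      · exact hdis _ _ hg
      · exact hd i j (by rintro rfl; exact hne rfl)
    · intro f hf
      rw [mem_union, mem_image] at hf
      rcases hf with hf | ⟨i, _, rfl⟩
      · exact hMW _ (mem_sdiff.mp hf).1
      · refine (hsub i).trans (union_subset ?_ sdiff_subset)
        intro x hx
        rw [mem_biUnion] at hx
        obtain ⟨g, hg, hxg⟩ := hx
        exact hMW g (hS hg) hxg
  have hdd : Disjoint (M \ S) (univ.image e) := by
    rw [Finset.disjoint_left]
    intro f hf hf'
    rw [mem_image] at hf'
    obtain ⟨i, _, rfl⟩ := hf'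
    have := hdis i _ hf
    rw [disjoint_self, Finset.bot_eq_empty] at this
    have h3 := hH _ (he i)
    rw [this] at h3; simp at h3
  rw [card_union_of_disjoint hdd, card_sdiff_of_subset hS, card_image_of_injective _ hinj,
    card_univ, Fintype.card_fin] at hN
  have := card_le_card hS
  omega

def cod (H : Finset (Finset V)) (U : Finset V) (x y : V) : ℕ := #{v ∈ U | {v, x, y} ∈ H}

lemma cod_comm (H : Finset (Finset V)) (U : Finset V) (x y : V) : cod H U x y = cod H U y x := by
  unfold cod
  congr 1; ext v; simp only [mem_filter]
  rw [Finset.pair_comm]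

lemma exchT {H M : Finset (Finset V)} {W : Finset V} (hH : ∀ e ∈ H, e.card = 3)
    (hMH : M ⊆ H) (hMd : (M : Set (Finset V)).Pairwise Disjoint) (hMW : ∀ e ∈ M, e ⊆ W)
    (hmax : ∀ N ⊆ H, (N : Set (Finset V)).Pairwise Disjoint → (∀ e ∈ N, e ⊆ W) → #N ≤ #M)
    (S : Finset (Finset V)) (hS : S ⊆ M) (k : ℕ) (hk : k ≤ 4) (x y : Fin k → V)
    (hx : ∀ i, x i ∈ S.biUnion id) (hy : ∀ i, y i ∈ S.biUnion id)
    (hT : ∀ i, 4 ≤ cod H (W \ M.biUnion id) (x i) (y i))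
    (hd : ∀ i j, i ≠ j → x i ≠ x j ∧ x i ≠ y j ∧ y i ≠ y j) : k ≤ #S := by
  set U := W \ M.biUnion id with hU
  have hall := (Finset.all_card_le_biUnion_card_iff_exists_injective
    (fun i : Fin k => {v ∈ U | {v, x i, y i} ∈ H})).mp (by
      intro s
      rcases s.eq_empty_or_nonempty with rfl | ⟨i, hi⟩
      · simp
      · calc #s ≤ k := by simpa using card_le_univ s
          _ ≤ 4 := hk
          _ ≤ _ := hT i
          _ ≤ _ := card_le_card (by
            intro v hv
            rw [mem_biUnion]; exact ⟨i, hi, hv⟩))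
  obtain ⟨v, hvi, hv⟩ := hall
  simp only [mem_filter] at hv
  have hnU : ∀ z ∈ S.biUnion id, z ∉ U := by
    intro z hz hzU
    rw [hU, mem_sdiff] at hzU
    exact hzU.2 (biUnion_subset_biUnion_of_subset_left _ hS hz)
  refine exch hH hMH hMd hMW hmax S hS k (fun i => {v i, x i, y i}) (fun i => (hv i).2) ?_ ?_
  · intro i z hz
    simp only [mem_insert, mem_singleton] at hz
    rw [mem_union]
    rcases hz with rfl | rfl | rfl
    · exact Or.inr (hv i).1
    · exact Or.inl (hx i)
    · exact Or.inl (hy i)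
  · intro i j hij
    have h1 : v i ≠ v j := fun h => hij (hvi h)
    have h2 : ∀ i j, v i ≠ x j := fun i j h => hnU _ (hx j) (h ▸ (hv i).1)
    have h3 : ∀ i j, v i ≠ y j := fun i j h => hnU _ (hy j) (h ▸ (hv i).1)
    have h4 := hd i j hij
    have h5 := hd j i hij.symm
    rw [Finset.disjoint_left]
    intro z hz hz'
    simp only [mem_insert, mem_singleton] at hz hz'
    rcases hz with rfl | rfl | rfl <;> rcases hz' with h | h | h
    · exact h1 h
    · exact h2 _ _ h
    · exact h3 _ _ h
    · exact h2 _ _ h.symm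
    · exact h4.1 h
    · exact h4.2.1 h
    · exact h3 _ _ h.symm
    · exact h5.2.1 h.symm
    · exact h4.2.2 h

lemma ex_phi (hV : Nonempty V) (M : Finset (Finset V)) (h : ∀ e ∈ M, #e = 3) :
    ∃ φ : Finset V → Fin 3 → V, ∀ e ∈ M, Function.Injective (φ e) ∧ univ.image (φ e) = e := by
  have : ∀ e : Finset V, ∃ f : Fin 3 → V, e ∈ M → Function.Injective f ∧ univ.image f = e := by
    intro e
    by_cases he : e ∈ M
    · obtain ⟨a, b, c, hab, hac, hbc, rfl⟩ := Finset.card_eq_three.mp (h e he)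
      refine ⟨![a,b,c], fun _ => ⟨?_, ?_⟩⟩
      · intro i j hij
        fin_cases i <;> fin_cases j <;> simp_all
      · ext x; simp [Fin.exists_fin_succ, eq_comm]
    · exact ⟨fun _ => hV.some, fun h => absurd h he⟩
  choose φ hφ using this
  exact ⟨φ, hφ⟩

lemma MM_bound {H M : Finset (Finset V)} {W : Finset V} (hH : ∀ e ∈ H, e.card = 3)
    (hMH : M ⊆ H) (hMd : (M : Set (Finset V)).Pairwise Disjoint) (hMW : ∀ e ∈ M, e ⊆ W)
    (hmax : ∀ N ⊆ H, (N : Set (Finset V)).Pairwise Disjoint → (∀ e ∈ N, e ⊆ W) → #N ≤ #M)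
    (hne : Nonempty V) :
    ∑ x ∈ M.biUnion id, ∑ y ∈ M.biUnion id, cod H (W \ M.biUnion id) x y ≤
      9 * #(W \ M.biUnion id) * #M + 27 * #M ^ 2 + 5 * #(W \ M.biUnion id) * #M ^ 2 := by
  set U := W \ M.biUnion id with hU
  obtain ⟨φ, hφ⟩ := ex_phi hne M (fun e he => hH e (hMH he))
  have hφm : ∀ e ∈ M, ∀ i, φ e i ∈ e := by
    intro e he i
    have := (hφ e he).2
    have h2 : φ e i ∈ univ.image (φ e) := mem_image_of_mem _ (mem_univ _)
    rwa [this] at h2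
  have hcross : ∀ e ∈ M, ∀ f ∈ M, e ≠ f → ∀ i j, φ e i ≠ φ f j := by
    intro e he f hf hef i j h
    exact Finset.disjoint_left.mp (hMd he hf hef) (hφm e he i) (h ▸ hφm f hf j)
  set r : Finset V → Finset V → Fin 3 → Fin 3 → Bool :=
    fun e f i j => decide (4 ≤ cod H U (φ e i) (φ f j)) with hr
  have hrs : ∀ e f i j, r e f i j = r f e j i := by
    intro e f i j; simp only [hr, cod_comm H U (φ e i)]
  have hpm : ∀ e ∈ M, ∀ f ∈ M, e ≠ f → pm (r e f) = false := by
    intro e he f hf hef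
    by_contra hcon
    rw [Bool.not_eq_false] at hcon
    obtain ⟨a, b, c, hn, h0, h1, h2⟩ := pm_spec _ hcon
    simp only [hr, decide_eq_true_eq] at h0 h1 h2
    have := exchT hH hMH hMd hMW hmax {e, f} (by
        intro g hg; simp only [mem_insert, mem_singleton] at hg
        rcases hg with rfl | rfl <;> assumption) 3 (by norm_num)
      (φ e) (fun i => φ f (![a,b,c] i))
      (fun i => by simp [hφm e he i]) (fun i => by simp [hφm f hf])
      (by intro i; fin_cases i <;> assumption)
      (by
        intro i j hij
        refine ⟨fun h => hij ((hφ e he).1 h), hcross e he f hf hef _ _, fun h => ?_⟩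
        have h' := (hφ f hf).1 h
        simp at hn
        fin_cases i <;> fin_cases j <;> simp_all)
    have h2 := Finset.card_le_two (a := e) (b := f)
    omega
  set w : Finset V → Finset V → ℕ := fun e f => if e = f then 0 else cnt (r e f) with hw
  have hsum := sum_le M w (by
      intro e _ f _
      simp only [hw, eq_comm (a := e)]
      split_ifs
      · rfl
      · simp only [cnt, hrs e f]; ring)
    (by
      intro e he f hf
      simp only [hw]
      split_ifs with h
      · omega
      · exact comb1 _ (hpm e he f hf h))
    (by
      intro e he f hf g hg hef heg
      simp only [hw] at hef heg ⊢
      by_cases h1 : e = f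
      · simp [h1] at hef
      by_cases h2 : e = g
      · simp [h2] at heg
      by_cases h3 : f = g
      · simp [h3]
      rw [if_neg h1] at hef
      rw [if_neg h2] at heg
      rw [if_neg h3]
      by_contra hcon
      obtain ⟨p0, q0, p1, q1, p2, q2, p3, q3, hnd, t0, t1, t2, t3⟩ :=
        comb (fun p q => 4 ≤ cod H U (φ (![e,f,g] p.1) p.2) (φ (![e,f,g] q.1) q.2))
        (r e f) (r e g) (r f g)
        (by intro i j h; simpa [hr] using h) (by intro i j h; simpa [hr] using h)
        (by intro i j h; simpa [hr] using h)
        (hpm e he f hf h1) (hpm e he g hg h2) hef.ge heg.ge (by omega)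
      have hmem : ∀ s, ![e,f,g] s ∈ M := by
        intro s; fin_cases s <;> assumption
      have hinj : ∀ p q : F9, p ≠ q → φ (![e,f,g] p.1) p.2 ≠ φ (![e,f,g] q.1) q.2 := by
        rintro ⟨a, i⟩ ⟨b, j⟩ hpq h
        by_cases hab : a = b
        · subst hab
          exact hpq (Prod.ext rfl ((hφ _ (hmem a)).1 h))
        · refine hcross _ (hmem a) _ (hmem b) ?_ _ _ h
          have h1' := Ne.symm h1
          have h2' := Ne.symm h2
          have h3' := Ne.symm h3
          fin_cases a <;> fin_cases b <;> first | exact absurd rfl hab | assumption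
      have hsub : ∀ p : F9, φ (![e,f,g] p.1) p.2 ∈ ({e, f, g} : Finset (Finset V)).biUnion id := by
        intro p
        rw [mem_biUnion]
        refine ⟨![e,f,g] p.1, ?_, hφm _ (hmem _) _⟩
        obtain ⟨a, i⟩ := p
        fin_cases a <;> simp
      have := exchT hH hMH hMd hMW hmax {e, f, g} (by
        intro g hg; simp only [mem_insert, mem_singleton] at hg
        rcases hg with rfl | rfl | rfl <;> assumption) 4 (by norm_num)
        (fun i => φ (![e,f,g] (![p0,p1,p2,p3] i).1) (![p0,p1,p2,p3] i).2)
        (fun i => φ (![e,f,g] (![q0,q1,q2,q3] i).1) (![q0,q1,q2,q3] i).2)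
        (fun i => hsub _) (fun i => hsub _)
        (by intro i; fin_cases i <;> assumption)
        (by
          intro i j hij
          simp only [List.nodup_cons, List.mem_cons, List.not_mem_nil, not_or] at hnd
          refine ⟨hinj _ _ ?_, hinj _ _ ?_, hinj _ _ ?_⟩ <;>
          fin_cases i <;> fin_cases j <;> first | exact absurd rfl hij | (simp; grind))
      have h3 := Finset.card_le_three (a := e) (b := f) (c := g)
      omega)
  have hsumE : ∀ e ∈ M, ∀ F : V → ℕ, ∑ x ∈ e, F x = F (φ e 0) + F (φ e 1) + F (φ e 2) := by
    intro e he F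
    conv_lhs => rw [← (hφ e he).2]
    rw [sum_image (fun a _ b _ h => (hφ e he).1 h), Fin.sum_univ_three]
  have hcod : ∀ x y, cod H U x y ≤ #U := fun x y => card_filter_le _ _
  have hEF : ∀ e ∈ M, ∀ f ∈ M, ∑ x ∈ e, ∑ y ∈ f, cod H U x y ≤
      (if e = f then 9 * #U else 0) + (27 + #U * w e f) := by
    intro e he f hf
    rw [hsumE e he]
    simp only [hsumE f hf]
    split_ifs with h
    · have h0 := fun i j => hcod (φ e i) (φ f j)
      have := h0 0 0; have := h0 0 1; have := h0 0 2
      have := h0 1 0; have := h0 1 1; have := h0 1 2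
      have := h0 2 0; have := h0 2 1; have := h0 2 2
      omega
    · have h0 : ∀ i j, cod H U (φ e i) (φ f j) ≤ 3 + #U * (r e f i j).toNat := by
        intro i j
        by_cases h4 : 4 ≤ cod H U (φ e i) (φ f j)
        · simp only [hr, h4, decide_true, Bool.toNat_true]
          have := hcod (φ e i) (φ f j)
          omega
        · omega
      have := h0 0 0; have := h0 0 1; have := h0 0 2
      have := h0 1 0; have := h0 1 1; have := h0 1 2
      have := h0 2 0; have := h0 2 1; have := h0 2 2
      simp only [hw, h, if_false, cnt, mul_add]
      omega
  have hpd : (M : Set (Finset V)).PairwiseDisjoint id := hMd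
  rw [sum_biUnion hpd]
  simp only [sum_biUnion hpd, id]
  calc ∑ e ∈ M, ∑ x ∈ e, ∑ f ∈ M, ∑ y ∈ f, cod H U x y
      = ∑ e ∈ M, ∑ f ∈ M, ∑ x ∈ e, ∑ y ∈ f, cod H U x y := by
        apply sum_congr rfl; intro e _; rw [sum_comm]
    _ ≤ ∑ e ∈ M, ∑ f ∈ M, ((if e = f then 9 * #U else 0) + (27 + #U * w e f)) := by
        apply sum_le_sum; intro e he; apply sum_le_sum; intro f hf; exact hEF e he f hf
    _ = 9 * #U * #M + 27 * #M ^ 2 + #U * ∑ e ∈ M, ∑ f ∈ M, w e f := by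
        simp only [sum_add_distrib, mul_sum, sum_const, smul_eq_mul]
        simp
        ring
    _ ≤ _ := by
        have := Nat.mul_le_mul_left (#U) hsum
        nlinarith

lemma UM_bound {H M : Finset (Finset V)} {W : Finset V} (hH : ∀ e ∈ H, e.card = 3)
    (hMH : M ⊆ H) (hMd : (M : Set (Finset V)).Pairwise Disjoint) (hMW : ∀ e ∈ M, e ⊆ W)
    (hmax : ∀ N ⊆ H, (N : Set (Finset V)).Pairwise Disjoint → (∀ e ∈ N, e ⊆ W) → #N ≤ #M) :
    ∑ x ∈ M.biUnion id, ∑ y ∈ (W \ M.biUnion id), cod H (W \ M.biUnion id) x y ≤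
      #M * (#(W \ M.biUnion id) ^ 2 + 8 * #(W \ M.biUnion id)) := by
  set U := W \ M.biUnion id with hU
  have hpd : (M : Set (Finset V)).PairwiseDisjoint id := hMd
  rw [sum_biUnion hpd]
  simp only [id]
  rw [← smul_eq_mul, ← sum_const]
  apply sum_le_sum
  intro e he
  -- pairs
  set D : V → ℕ := fun x => ∑ y ∈ U, cod H U x y with hD
  have hDle : ∀ x, D x ≤ #U ^ 2 := by
    intro x
    calc D x ≤ ∑ y ∈ U, #U := sum_le_sum fun y _ => card_filter_le _ _
      _ = _ := by simp [sq]
  have hDcard : ∀ x, D x = #{p ∈ U ×ˢ U | ({p.2, x, p.1} : Finset V) ∈ H} := by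
    intro x
    rw [card_filter, sum_product]
    simp only [hD, cod, card_filter]
  have hUn : ∀ z ∈ U, z ∉ e := by
    intro z hz hze
    rw [hU, mem_sdiff, mem_biUnion] at hz
    exact hz.2 ⟨e, he, hze⟩
  have main : ∀ a ∈ e, ∀ b ∈ e, a ≠ b → 4 * #U < D a → 4 * #U < D b → False := by
    intro a ha b hb hab hDa hDb
    rw [hDcard] at hDa hDb
    obtain ⟨p, hp⟩ := Finset.card_pos.mp (lt_of_le_of_lt (Nat.zero_le _) hDa)
    simp only [mem_filter, mem_product] at hp
    have : ∃ q ∈ ({p ∈ U ×ˢ U | ({p.2, b, p.1} : Finset V) ∈ H}),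
        q ∉ (({p.1, p.2} : Finset V) ×ˢ U) ∪ (U ×ˢ ({p.1, p.2} : Finset V)) := by
      apply Finset.exists_mem_notMem_of_card_lt_card
      refine lt_of_le_of_lt ?_ hDb
      refine (card_union_le _ _).trans ?_
      rw [card_product, card_product]
      have := Finset.card_le_two (a := p.1) (b := p.2)
      nlinarith
    obtain ⟨q, hq, hq'⟩ := this
    simp only [mem_filter, mem_product] at hq
    simp only [mem_union, mem_product, mem_insert, mem_singleton, not_or, not_and] at hq'
    have n1 : q.1 ≠ p.1 ∧ q.1 ≠ p.2 := by
      constructor <;> intro h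
      · exact hq'.1 (Or.inl h) hq.1.2
      · exact hq'.1 (Or.inr h) hq.1.2
    have n2 := hq'.2 hq.1.1
    have := exch hH hMH hMd hMW hmax {e} (by simpa using he) 2
      ![{p.2, a, p.1}, {q.2, b, q.1}]
      (by intro i; fin_cases i; exacts [hp.2, hq.2])
      (by
        intro i
        fin_cases i
        · intro z hz
          simp at hz
          rw [mem_union]
          rcases hz with rfl | rfl | rfl
          · exact Or.inr hp.1.2
          · left; simpa using ha
          · exact Or.inr hp.1.1
        · intro z hz
          simp at hz
          rw [mem_union]
          rcases hz with rfl | rfl | rfl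
          · exact Or.inr hq.1.2
          · left; simpa using hb
          · exact Or.inr hq.1.1)
      (by
        have hdd : Disjoint ({p.2, a, p.1} : Finset V) {q.2, b, q.1} := by
          have h1 := hUn _ hp.1.1
          have h2 := hUn _ hp.1.2
          have h3 := hUn _ hq.1.1
          have h4 := hUn _ hq.1.2
          rw [Finset.disjoint_left]
          intro z hz hz'
          simp only [mem_insert, mem_singleton] at hz hz'
          grind
        intro i j hij
        fin_cases i <;> fin_cases j
        · exact absurd rfl hij
        · exact hdd
        · exact hdd.symm
        · exact absurd rfl hij)
    simp at this
  obtain ⟨a, b, c, hab, hac, hbc, rfl⟩ := Finset.card_eq_three.mp (hH e (hMH he))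
  rw [sum_insert (by simp [hab, hac]), sum_insert (by simp [hbc]), sum_singleton]
  have m1 := main a (by simp) b (by simp) hab
  have m2 := main a (by simp) c (by simp) hac
  have m3 := main b (by simp) c (by simp) hbc
  have := hDle a; have := hDle b; have := hDle c
  change D a + (D b + D c) ≤ _
  by_cases ha : 4 * #U < D a <;> by_cases hb : 4 * #U < D b <;> by_cases hc : 4 * #U < D c <;>
    first | exact (m1 ha hb).elim | exact (m2 ha hc).elim | exact (m3 hb hc).elim | (simp only [not_lt] at *; omega)

lemma final_ineq (β u m : ℝ) (hβ : 0 < β) (hm0 : 0 ≤ m) (hu1 : 6 / β < u)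
    (hn1 : 18 / β < 3 * m + u)
    (hfin : u * ((5 / 9 + β) * (3 * m + u) ^ 2) ≤ 9 * u * m + 27 * m ^ 2 + 5 * u * m ^ 2 +
        2 * (m * (u ^ 2 + 8 * u))) : False := by
  have hu0 : 0 < u := lt_trans (by positivity) hu1
  rw [div_lt_iff₀ hβ] at hu1 hn1
  have k5 : 3 * (m * u) ≤ (3 * m + u) * u := by nlinarith
  have k4 : 9 * m ^ 2 ≤ (3 * m + u) ^ 2 := by nlinarith [mul_nonneg hm0 hu0.le]
  have e : u * ((5 / 9 + β) * (3 * m + u) ^ 2) = 5 * u * m ^ 2 + 10 / 3 * (m * u ^ 2)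
      + 5 / 9 * u ^ 3 + β * u * (3 * m + u) ^ 2 := by ring
  rw [e] at hfin
  have hn0 : 0 < 3 * m + u := by positivity
  generalize 3 * m + u = n at *
  have k1 : 6 * n ^ 2 ≤ u * β * n ^ 2 := mul_le_mul_of_nonneg_right hu1.le (by positivity)
  have k2 : 18 * (n * u) ≤ n * β * (n * u) := mul_le_mul_of_nonneg_right hn1.le (by positivity)
  have k3 : β * u * n ^ 2 ≤ 27 * m ^ 2 + 25 * u * m := by
    have : 0 ≤ m * u ^ 2 := by positivity
    have : 0 ≤ u ^ 3 := by positivity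
    nlinarith
  have : 0 < n * u := by positivity
  nlinarith

lemma near_perfect (β : ℝ) (hβ : 0 < β) : ∃ K : ℕ, ∃ n₀ : ℕ, ∀ (V : Type) [DecidableEq V]
    (H : Finset (Finset V)) (W : Finset V), (∀ e ∈ H, e.card = 3) → n₀ ≤ #W →
    (∀ v ∈ W, (5 / 9 + β) * (#W : ℝ) ^ 2 ≤ #{p ∈ W ×ˢ W | {v, p.1, p.2} ∈ H}) →
    ∃ M ⊆ H, (M : Set (Finset V)).Pairwise Disjoint ∧ M.biUnion id ⊆ W ∧
      #(W \ M.biUnion id) ≤ K := by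
  obtain ⟨K, hK⟩ := exists_nat_gt (6 / β)
  obtain ⟨n₀, hn₀⟩ := exists_nat_gt (18 / β)
  refine ⟨K, n₀, ?_⟩
  intro V _ H W hH hn hdeg
  classical
  set Fam := H.powerset.filter fun N : Finset (Finset V) => (N : Set (Finset V)).Pairwise Disjoint ∧ ∀ e ∈ N, e ⊆ W
    with hFam
  obtain ⟨M, hM, hMm⟩ := Finset.exists_max_image Fam Finset.card ⟨∅, by simp [hFam]⟩
  simp only [hFam, mem_filter, mem_powerset] at hM hMm
  obtain ⟨hMH, hMd, hMW⟩ := hM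
  have hmax : ∀ N ⊆ H, (N : Set (Finset V)).Pairwise Disjoint → (∀ e ∈ N, e ⊆ W) → #N ≤ #M :=
    fun N h1 h2 h3 => hMm N ⟨h1, h2, h3⟩
  have hXW : M.biUnion id ⊆ W := by
    intro x hx
    rw [mem_biUnion] at hx
    obtain ⟨e, he, hx⟩ := hx
    exact hMW e he hx
  refine ⟨M, hMH, hMd, hXW, ?_⟩
  by_contra hcon
  rw [not_le] at hcon
  have hUpos : 0 < #(W \ M.biUnion id) := by omega
  have hne : Nonempty V := ⟨(Finset.card_pos.mp hUpos).choose⟩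
  have B1 := MM_bound hH hMH hMd hMW hmax hne
  have B2 := UM_bound hH hMH hMd hMW hmax
  set U := W \ M.biUnion id with hU
  set X := M.biUnion id with hX
  have hpd : (M : Set (Finset V)).PairwiseDisjoint id := hMd
  have hXc : #X = 3 * #M := by
    rw [hX, card_biUnion hpd]
    simp only [id]
    rw [sum_congr rfl (fun e he => hH e (hMH he))]
    simp [mul_comm]
  have hWc : #W = 3 * #M + #U := by
    have := card_sdiff_add_card_eq_card hXW
    rw [← hU] at this
    omega
  have hUU : ∀ x ∈ U, ∀ y ∈ U, cod H U x y = 0 := by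
    intro x hx y hy
    rw [cod, card_eq_zero, filter_eq_empty_iff]
    intro v hv hmem
    have := exch hH hMH hMd hMW hmax ∅ (by simp) 1 (fun _ => {v, x, y}) (fun _ => hmem)
      (by
        intro _ z hz
        simp only [mem_insert, mem_singleton] at hz
        rw [mem_union]; right
        rcases hz with rfl | rfl | rfl <;> assumption)
      (by intro i j hij; exact absurd (Subsingleton.elim i j) hij)
    simp at this
  have hsplit : W = X ∪ U := by rw [hU, union_sdiff_of_subset hXW]
  have hXU : Disjoint X U := by rw [hU]; exact disjoint_sdiff
  have tot : ∑ v ∈ U, #{p ∈ W ×ˢ W | {v, p.1, p.2} ∈ H} =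
      ∑ x ∈ X, ∑ y ∈ X, cod H U x y + 2 * ∑ x ∈ X, ∑ y ∈ U, cod H U x y := by
    have e1 : ∑ v ∈ U, #{p ∈ W ×ˢ W | {v, p.1, p.2} ∈ H} = ∑ x ∈ W, ∑ y ∈ W, cod H U x y := by
      simp only [card_filter, cod]
      rw [sum_comm, sum_product]
    rw [e1]
    have e2 : ∀ F : V → ℕ, ∑ x ∈ W, F x = ∑ x ∈ X, F x + ∑ x ∈ U, F x := by
      intro F
      conv_lhs => rw [hsplit]
      rw [sum_union hXU]
    simp only [e2, sum_add_distrib]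
    have e3 : ∑ x ∈ U, ∑ y ∈ U, cod H U x y = 0 :=
      sum_eq_zero fun x hx => sum_eq_zero fun y hy => hUU x hx y hy
    have e4 : ∑ x ∈ U, ∑ y ∈ X, cod H U x y = ∑ x ∈ X, ∑ y ∈ U, cod H U x y := by
      rw [sum_comm]
      exact sum_congr rfl fun x _ => sum_congr rfl fun y _ => cod_comm _ _ _ _
    rw [e3, e4]; ring
  have low : (#U : ℝ) * ((5 / 9 + β) * (#W : ℝ) ^ 2) ≤
      ∑ v ∈ U, (#{p ∈ W ×ˢ W | {v, p.1, p.2} ∈ H} : ℝ) := by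
    rw [← nsmul_eq_mul, ← sum_const]
    exact sum_le_sum fun v hv => hdeg v (by rw [hsplit]; exact mem_union_right _ hv)
  have up : (∑ v ∈ U, (#{p ∈ W ×ˢ W | {v, p.1, p.2} ∈ H} : ℝ)) ≤
      9 * #U * #M + 27 * (#M : ℝ) ^ 2 + 5 * #U * (#M : ℝ) ^ 2 +
        2 * (#M * ((#U : ℝ) ^ 2 + 8 * #U)) := by
    have := tot.le.trans (add_le_add B1 (Nat.mul_le_mul_left 2 B2))
    exact_mod_cast this
  have hfin := low.trans up
  rw [hWc] at hfin hn
  push_cast at hfin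
  refine final_ineq β (#U : ℝ) (#M : ℝ) hβ (Nat.cast_nonneg _) ?_ ?_ hfin
  · exact hK.trans (by exact_mod_cast hcon)
  · exact lt_of_lt_of_le hn₀ (by exact_mod_cast hn)

end
end PMx

namespace PMx

section
variable {V : Type} [DecidableEq V]

def PM (H : Finset (Finset V)) (S : Finset V) : Prop :=
  ∃ M ⊆ H, (M : Set (Finset V)).Pairwise Disjoint ∧ M.biUnion id = S

lemma PM.empty (H : Finset (Finset V)) : PM H ∅ := ⟨∅, by simp, by simp, by simp⟩

lemma PM.single {H : Finset (Finset V)} {e : Finset V} (he : e ∈ H) : PM H e :=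
  ⟨{e}, by simpa using he, by simp, by simp⟩

lemma PM.union {H : Finset (Finset V)} {S S' : Finset V} (h : PM H S) (h' : PM H S')
    (hd : Disjoint S S') : PM H (S ∪ S') := by
  obtain ⟨M, hM, hMd, rfl⟩ := h
  obtain ⟨N, hN, hNd, rfl⟩ := h'
  have hx : ∀ e ∈ M, ∀ f ∈ N, Disjoint e f := by
    intro e he f hf
    exact hd.mono (subset_biUnion_of_mem id he) (subset_biUnion_of_mem id hf)
  refine ⟨M ∪ N, union_subset hM hN, ?_, ?_⟩
  · intro e he f hf hne
    rw [mem_coe, mem_union] at he hf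
    rcases he with he | he <;> rcases hf with hf | hf
    · exact hMd he hf hne
    · exact hx e he f hf
    · exact (hx f hf e he).symm
    · exact hNd he hf hne
  · ext x; simp only [mem_biUnion, mem_union, id]; grind

variable [Fintype V]

def L (H : Finset (Finset V)) (v : V) : Finset (V × V) := {p | {v, p.1, p.2} ∈ H}

def av (P : Finset (V × V)) (Z : Finset V) : Finset (V × V) := {p ∈ P | p.1 ∉ Z ∧ p.2 ∉ Z}

lemma av_card (P : Finset (V × V)) (Z : Finset V) :
    #P ≤ #(av P Z) + 2 * #Z * Fintype.card V := by
  have : P ⊆ av P Z ∪ ((Z ×ˢ univ) ∪ (univ ×ˢ Z)) := by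
    intro p hp
    simp only [av, mem_union, mem_filter, mem_product, mem_univ, true_and, and_true, hp]
    tauto
  refine (card_le_card this).trans ((card_union_le _ _).trans ?_)
  have := card_union_le (Z ×ˢ (univ : Finset V)) (univ ×ˢ Z)
  rw [card_product, card_product, card_univ] at this
  nlinarith

lemma av_card' (P : Finset (V × V)) (Z : Finset V) (hP : (Fintype.card V) ^ 2 ≤ 9 * #P)
    (hZ : 36 * #Z ≤ Fintype.card V) : (Fintype.card V) ^ 2 ≤ 18 * #(av P Z) := by
  have := av_card P Z
  nlinarith

lemma common {H : Finset (Finset V)} (hd : ∀ v, 5 * (Fintype.card V) ^ 2 ≤ 9 * #(L H v))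
    (x y : V) : (Fintype.card V) ^ 2 ≤ 9 * #(L H x ∩ L H y) := by
  have h1 := card_inter_add_card_union (L H x) (L H y)
  have h2 := card_le_univ (L H x ∪ L H y)
  rw [Fintype.card_prod] at h2
  have := hd x
  have := hd y
  nlinarith

def P1 (H : Finset (Finset V)) (Z : Finset V) (x : V × V × V) : Finset (V × V) := av (L H x.1) Z
def P2 (H : Finset (Finset V)) (Z : Finset V) (x : V × V × V) (p : V × V) : Finset (V × V) :=
  av (L H x.2.1 ∩ L H p.1) (Z ∪ {p.1, p.2})
def P3 (H : Finset (Finset V)) (Z : Finset V) (x : V × V × V) (p q : V × V) : Finset (V × V) :=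
  av (L H x.2.2 ∩ L H p.2) (Z ∪ {p.1, p.2} ∪ {q.1, q.2})

def Abs (H : Finset (Finset V)) (Z : Finset V) (x : V × V × V)
    (a : (V × V) × (V × V) × (V × V)) : Prop :=
  a.1 ∈ P1 H Z x ∧ a.2.1 ∈ P2 H Z x a.1 ∧ a.2.2 ∈ P3 H Z x a.1 a.2.1

instance (H : Finset (Finset V)) (Z : Finset V) (x : V × V × V) : DecidablePred (Abs H Z x) :=
  fun _ => by unfold Abs; infer_instance

lemma abs_count {H : Finset (Finset V)} (hd : ∀ v, 5 * (Fintype.card V) ^ 2 ≤ 9 * #(L H v))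
    (Z : Finset V) (hZ : 36 * (#Z + 4) ≤ Fintype.card V) (x : V × V × V) :
    ((Fintype.card V : ℝ) ^ 2 / 18) ^ 3 ≤
      #{a : (V × V) × (V × V) × (V × V) | Abs H Z x a} := by
  set k : ℝ := (Fintype.card V : ℝ) ^ 2 / 18 with hk
  have hk0 : 0 ≤ k := by positivity
  have cast : ∀ P : Finset (V × V), (Fintype.card V) ^ 2 ≤ 18 * #P → k ≤ #P := by
    intro P h
    have : ((Fintype.card V : ℝ)) ^ 2 ≤ 18 * #P := by exact_mod_cast h
    rw [hk]; linarith
  have c1 : k ≤ #(P1 H Z x) := cast _ (av_card' _ _ (by have := hd x.1; omega) (by omega))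
  have c2 : ∀ p, k ≤ #(P2 H Z x p) := fun p => cast _ (av_card' _ _ (common hd _ _) (by
    have := card_union_le Z {p.1, p.2}
    have := Finset.card_le_two (a := p.1) (b := p.2)
    omega))
  have c3 : ∀ p q, k ≤ #(P3 H Z x p q) := fun p q => cast _ (av_card' _ _ (common hd _ _) (by
    have := card_union_le Z {p.1, p.2}
    have := card_union_le (Z ∪ {p.1, p.2}) {q.1, q.2}
    have := Finset.card_le_two (a := p.1) (b := p.2)
    have := Finset.card_le_two (a := q.1) (b := q.2)
    omega))
  have e : (#{a : (V × V) × (V × V) × (V × V) | Abs H Z x a} : ℝ) =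
      ∑ p ∈ P1 H Z x, ∑ q ∈ P2 H Z x p, (#(P3 H Z x p q) : ℝ) := by
    have : #{a : (V × V) × (V × V) × (V × V) | Abs H Z x a} =
        ∑ p ∈ P1 H Z x, ∑ q ∈ P2 H Z x p, #(P3 H Z x p q) := by
      rw [card_filter, Fintype.sum_prod_type, ← sum_subset (subset_univ (P1 H Z x))]
      · apply sum_congr rfl
        intro p hp
        rw [Fintype.sum_prod_type, ← sum_subset (subset_univ (P2 H Z x p))]
        · apply sum_congr rfl
          intro q hq
          simp [Abs, hp, hq]
        · intro q _ hq
          simp [Abs, hq]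
      · intro p _ hp
        simp [Abs, hp]
    rw [this]; push_cast; rfl
  rw [e]
  calc k ^ 3 = k * (k * k) := by ring
    _ ≤ #(P1 H Z x) * (k * k) := by gcongr
    _ = ∑ p ∈ P1 H Z x, k * k := by simp
    _ ≤ _ := by
      apply sum_le_sum; intro p _
      calc k * k ≤ #(P2 H Z x p) * k := by gcongr; exact c2 p
        _ = ∑ q ∈ P2 H Z x p, k := by simp
        _ ≤ _ := sum_le_sum fun q _ => c3 p q

lemma abs_exists {H : Finset (Finset V)} (hd : ∀ v, 5 * (Fintype.card V) ^ 2 ≤ 9 * #(L H v))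
    (Z : Finset V) (hZ : 36 * (#Z + 4) ≤ Fintype.card V) (𝒯 : Finset (V × V × V)) :
    ∃ a, (1 / 5832 : ℝ) * #𝒯 ≤ #{x ∈ 𝒯 | Abs H Z x a} := by
  by_contra hcon
  push Not at hcon
  have hpos : 0 < Fintype.card V := by omega
  have : Nonempty V := Fintype.card_pos_iff.mp hpos
  have h1 : ∑ a : (V × V) × (V × V) × (V × V), (#{x ∈ 𝒯 | Abs H Z x a} : ℝ) <
      ∑ a : (V × V) × (V × V) × (V × V), (1 / 5832 : ℝ) * #𝒯 :=
    sum_lt_sum_of_nonempty univ_nonempty fun a _ => hcon a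
  have h2 : ∑ a : (V × V) × (V × V) × (V × V), (#{x ∈ 𝒯 | Abs H Z x a} : ℝ) =
      ∑ x ∈ 𝒯, (#{a : (V × V) × (V × V) × (V × V) | Abs H Z x a} : ℝ) := by
    simp only [card_filter, Nat.cast_sum]
    rw [sum_comm]
  have h3 : ∑ x ∈ 𝒯, ((Fintype.card V : ℝ) ^ 2 / 18) ^ 3 ≤
      ∑ x ∈ 𝒯, (#{a : (V × V) × (V × V) × (V × V) | Abs H Z x a} : ℝ) :=
    sum_le_sum fun x _ => abs_count hd Z hZ x
  rw [h2] at h1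
  have h4 := h3.trans_lt h1
  simp only [sum_const, card_univ, Fintype.card_prod, nsmul_eq_mul] at h4
  push_cast at h4
  refine absurd h4 (not_lt.mpr (le_of_eq ?_))
  ring

def vs (a : (V × V) × (V × V) × (V × V)) : Finset V :=
  {a.1.1, a.2.1.1, a.2.1.2} ∪ {a.1.2, a.2.2.1, a.2.2.2}

lemma ne3 {H : Finset (Finset V)} (hH : ∀ e ∈ H, #e = 3) {x y z : V} (h : {x, y, z} ∈ H) :
    x ≠ y ∧ x ≠ z ∧ y ≠ z := by
  have := hH _ h
  refine ⟨?_, ?_, ?_⟩ <;> rintro rfl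
  · have h2 := Finset.card_le_two (a := x) (b := z)
    simp at this; omega
  · have h2 := Finset.card_le_two (a := x) (b := y)
    rw [show ({x, y, x} : Finset V) = {x, y} by ext; simp; tauto] at this; omega
  · have h2 := Finset.card_le_two (a := x) (b := y)
    simp at this; omega

lemma abs_spec {H : Finset (Finset V)} (hH : ∀ e ∈ H, #e = 3) {Z : Finset V} {x : V × V × V}
    {a : (V × V) × (V × V) × (V × V)} (h : Abs H Z x a) :
    Disjoint (vs a) Z ∧ PM H (vs a) ∧
    (x.1 ≠ x.2.1 → x.1 ≠ x.2.2 → x.2.1 ≠ x.2.2 → Disjoint {x.1, x.2.1, x.2.2} (vs a) →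
      PM H (vs a ∪ {x.1, x.2.1, x.2.2})) := by
  obtain ⟨x1, x2, x3⟩ := x
  obtain ⟨⟨p1, p2⟩, ⟨q1, q2⟩, ⟨r1, r2⟩⟩ := a
  simp only [Abs, P1, P2, P3, av, L, mem_filter, mem_inter, mem_univ, true_and, mem_union,
    mem_insert, mem_singleton, not_or] at h
  obtain ⟨⟨a1, a2, a3⟩, ⟨⟨b1, b1'⟩, b2, b3⟩, ⟨⟨c1, c1'⟩, c2, c3⟩⟩ := h
  have na := ne3 hH a1
  have nb := ne3 hH b1
  have nc := ne3 hH c1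
  have hd1 : Disjoint ({p1, q1, q2} : Finset V) {p2, r1, r2} := by
    rw [disjoint_left]
    intro z hz hz'
    simp only [mem_insert, mem_singleton] at hz hz'
    grind
  refine ⟨?_, ?_, ?_⟩
  · rw [disjoint_left]
    intro z hz hz'
    simp only [vs, mem_union, mem_insert, mem_singleton] at hz
    grind
  · exact (PM.single b1').union (PM.single c1') hd1
  · simp only [vs]
    intro h12 h13 h23 hd
    have hh : ∀ z, z = x1 ∨ z = x2 ∨ z = x3 → z ≠ p1 ∧ z ≠ p2 ∧ z ≠ q1 ∧ z ≠ q2 ∧ z ≠ r1 ∧ z ≠ r2 := by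
      intro z hz
      have := Finset.disjoint_left.mp hd (show z ∈ ({x1, x2, x3} : Finset V) by simpa using hz)
      simp only [mem_union, mem_insert, mem_singleton, not_or] at this
      grind
    have hx1 := hh x1 (by simp)
    have hx2 := hh x2 (by simp)
    have hx3 := hh x3 (by simp)
    have := ((PM.single a1).union (PM.single b1) (by
      rw [disjoint_left]
      intro z hz hz'
      simp only [mem_insert, mem_singleton] at hz hz'
      grind)).union (PM.single c1) (by
      rw [disjoint_left]
      intro z hz hz'
      simp only [mem_union, mem_insert, mem_singleton] at hz hz'
      grind)
    convert this using 1
    ext z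
    simp only [mem_union, mem_insert, mem_singleton]
    simp only [or_assoc, or_comm, or_left_comm]

lemma vs_card (a : (V × V) × (V × V) × (V × V)) : #(vs a) ≤ 6 := by
  unfold vs
  have h1 := card_union_le ({a.1.1, a.2.1.1, a.2.1.2} : Finset V) {a.1.2, a.2.2.1, a.2.2.2}
  have h2 := Finset.card_le_three (a := a.1.1) (b := a.2.1.1) (c := a.2.1.2)
  have h3 := Finset.card_le_three (a := a.1.2) (b := a.2.2.1) (c := a.2.2.2)
  omega

lemma round {H : Finset (Finset V)} (hH : ∀ e ∈ H, #e = 3)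
    (hd : ∀ v, 5 * (Fintype.card V) ^ 2 ≤ 9 * #(L H v)) (j : ℕ) :
    ∀ (Z : Finset V) (𝒯 : Finset (V × V × V)), 36 * (#Z + 6 * j + 4) ≤ Fintype.card V →
    (#𝒯 : ℝ) * (5831 / 5832) ^ j < 1 →
    ∃ B : Finset V, Disjoint B Z ∧ #B ≤ 6 * j ∧ PM H B ∧ ∀ x ∈ 𝒯,
      x.1 ≠ x.2.1 → x.1 ≠ x.2.2 → x.2.1 ≠ x.2.2 → Disjoint {x.1, x.2.1, x.2.2} B →
      PM H (B ∪ {x.1, x.2.1, x.2.2}) := by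
  induction j with
  | zero =>
    intro Z 𝒯 _ h
    have h' : #𝒯 = 0 := by
      have : (#𝒯 : ℝ) < 1 := by simpa using h
      have : #𝒯 < 1 := by exact_mod_cast this
      omega
    rw [card_eq_zero] at h'
    exact ⟨∅, by simp, by simp, PM.empty H, by simp [h']⟩
  | succ j ih =>
    intro Z 𝒯 hZ h
    obtain ⟨a, ha⟩ := abs_exists hd Z (by omega) 𝒯
    by_cases hemp : ∃ x ∈ 𝒯, Abs H Z x a
    · obtain ⟨x₀, hx₀, habs⟩ := hemp
      obtain ⟨s1, s2, -⟩ := abs_spec hH habs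
      have hsplit := card_filter_add_card_filter_not (s := 𝒯) (fun x => Abs H Z x a)
      obtain ⟨B, hB1, hB2, hB3, hB4⟩ := ih (Z ∪ vs a) {x ∈ 𝒯 | ¬ Abs H Z x a} (by
          have := card_union_le Z (vs a)
          have := vs_card a
          omega) (by
          refine lt_of_le_of_lt ?_ h
          rw [pow_succ', ← mul_assoc]
          gcongr
          have : (#{x ∈ 𝒯 | Abs H Z x a} : ℝ) + #{x ∈ 𝒯 | ¬ Abs H Z x a} = #𝒯 := by
            exact_mod_cast hsplit
          linarith)
      rw [disjoint_union_right] at hB1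
      refine ⟨B ∪ vs a, ?_, ?_, hB3.union s2 hB1.2, ?_⟩
      · rw [disjoint_union_left]; exact ⟨hB1.1, s1⟩
      · have := card_union_le B (vs a)
        have := vs_card a
        omega
      · intro x hx h1 h2 h3 hdis
        rw [disjoint_union_right] at hdis
        by_cases hxa : Abs H Z x a
        · have := (abs_spec hH hxa).2.2 h1 h2 h3 hdis.2
          rw [union_assoc]
          exact hB3.union this (by
            rw [disjoint_union_right]; exact ⟨hB1.2, hdis.1.symm⟩)
        · have := hB4 x (by simp [hx, hxa]) h1 h2 h3 hdis.1
          rw [union_right_comm]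
          exact this.union s2 (by
            rw [disjoint_union_left]; exact ⟨hB1.2, hdis.2⟩)
    · have h0 : #{x ∈ 𝒯 | Abs H Z x a} = 0 := by
        rw [card_eq_zero, filter_eq_empty_iff]
        intro x hx hxa; exact hemp ⟨x, hx, hxa⟩
      rw [h0] at ha
      have h' : #𝒯 = 0 := by
        have h1 : (0 : ℝ) ≤ #𝒯 := Nat.cast_nonneg _
        have : (#𝒯 : ℝ) = 0 := by push_cast at ha; linarith
        exact_mod_cast this
      rw [card_eq_zero] at h'
      exact ⟨∅, by simp, by simp, PM.empty H, by simp [h']⟩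

lemma absorb {H : Finset (Finset V)} (hH : ∀ e ∈ H, #e = 3)
    (hd : ∀ v, 5 * (Fintype.card V) ^ 2 ≤ 9 * #(L H v)) (l : ℕ)
    (hl : (Fintype.card V : ℝ) ^ 3 * (5831 / 5832) ^ l < 1) (k : ℕ) :
    36 * (6 * l * k + 4) ≤ Fintype.card V →
    ∃ A : Finset V, #A ≤ 6 * l * k ∧ PM H A ∧ ∀ j ≤ k, ∀ U : Finset V, Disjoint U A → #U = 3 * j →
      PM H (A ∪ U) := by
  induction k with
  | zero =>
    intro _
    refine ⟨∅, by simp, PM.empty H, ?_⟩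
    intro j hj U _ hU
    have : #U = 0 := by omega
    rw [card_eq_zero] at this
    subst this
    exact PM.empty H
  | succ k ih =>
    intro hk
    obtain ⟨A, hA1, hA2, hA3⟩ := ih (by nlinarith)
    obtain ⟨B, hB1, hB2, hB3, hB4⟩ := round hH hd l A univ (by nlinarith) (by
      rw [card_univ, Fintype.card_prod, Fintype.card_prod]
      push_cast
      convert hl using 2; ring)
    refine ⟨B ∪ A, ?_, hB3.union hA2 hB1, ?_⟩
    · have := card_union_le B A
      nlinarith
    · intro j hj U hUd hU
      rw [disjoint_union_right] at hUd
      rcases j with _ | j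
      · have : #U = 0 := by omega
        rw [card_eq_zero] at this
        subst this
        rw [union_empty]
        exact hB3.union hA2 hB1
      · obtain ⟨T, hTU, hT⟩ := exists_subset_card_eq (s := U) (n := 3) (by omega)
        obtain ⟨x, y, z, hxy, hxz, hyz, rfl⟩ := card_eq_three.mp hT
        have h1 := hB4 (x, y, z) (mem_univ _) hxy hxz hyz (hUd.1.mono_left hTU)
        have h2 := hA3 j (by omega) (U \ {x, y, z}) (hUd.2.mono_left sdiff_subset) (by
          rw [card_sdiff_of_subset hTU, hT]; omega)
        have h3 := h1.union h2 (by
          simp only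
          rw [disjoint_union_left, disjoint_union_right, disjoint_union_right]
          exact ⟨⟨hB1, hUd.1.symm.mono_right sdiff_subset⟩, hUd.2.mono_left hTU, disjoint_sdiff⟩)
        convert h3 using 1
        ext v
        have : v ∈ ({x, y, z} : Finset V) → v ∈ U := fun h => hTU h
        simp only [mem_union, mem_sdiff]
        tauto

lemma two_deg {H : Finset (Finset V)} (hH : ∀ e ∈ H, #e = 3) (v : V) :
    2 * #{e ∈ H | v ∈ e} ≤ #(L H v) := by
  have hmap : ∀ p ∈ L H v, ({v, p.1, p.2} : Finset V) ∈ {e ∈ H | v ∈ e} := by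
    intro p hp
    simp only [L, mem_filter, mem_univ, true_and] at hp
    simp [hp]
  rw [card_eq_sum_card_fiberwise (f := fun p : V × V => ({v, p.1, p.2} : Finset V)) hmap,
    mul_comm, ← smul_eq_mul, ← sum_const]
  apply sum_le_sum
  intro e he
  rw [mem_filter] at he
  have h2 : #(e.erase v) = 2 := by rw [card_erase_of_mem he.2, hH e he.1]
  obtain ⟨x, y, hxy, hexy⟩ := card_eq_two.mp h2
  have hev : e = {v, x, y} := by rw [← hexy, insert_erase he.2]
  rw [← card_pair (a := (x, y)) (b := (y, x)) (by intro h; exact hxy (Prod.ext_iff.mp h).1)]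
  apply card_le_card
  intro p hp
  simp only [mem_insert, mem_singleton] at hp
  have hyx : ({v, y, x} : Finset V) = {v, x, y} := by rw [pair_comm]
  rcases hp with rfl | rfl
  · simp [L, ← hev, he.1]
  · simp [L, hyx, ← hev, he.1]

end

lemma exp_small (q : ℕ) (hq : 0 < q) : ∃ n₀ : ℕ, ∀ n ≥ n₀,
    (n : ℝ) ^ 3 * (5831 / 5832) ^ (n / q) < 1 := by
  have h1 := tendsto_pow_const_mul_const_pow_of_abs_lt_one 3
    (r := (5831 / 5832 : ℝ)) (by rw [abs_of_pos] <;> norm_num)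
  have h2 := (h1.comp (Filter.tendsto_add_atTop_nat 1)).comp (Nat.tendsto_div_const_atTop hq.ne')
  have h3 := h2.eventually (gt_mem_nhds (show (0 : ℝ) < (5831 / 5832) / (q : ℝ) ^ 3 by positivity))
  obtain ⟨n₀, h⟩ := Filter.eventually_atTop.mp h3
  refine ⟨n₀, fun n hn => ?_⟩
  have := h n hn
  simp only [Function.comp] at this
  rw [lt_div_iff₀ (by positivity), pow_succ (5831 / 5832 : ℝ)] at this
  have hle : n ≤ q * (n / q + 1) := by
    have := Nat.div_add_mod n q
    have := Nat.mod_lt n hq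
    nlinarith
  have hle' : (n : ℝ) ≤ q * ((n / q + 1 : ℕ) : ℝ) := by exact_mod_cast hle
  have : (n : ℝ) ^ 3 ≤ (q * ((n / q + 1 : ℕ) : ℝ)) ^ 3 := by gcongr
  calc (n : ℝ) ^ 3 * (5831 / 5832) ^ (n / q)
      ≤ (q * ((n / q + 1 : ℕ) : ℝ)) ^ 3 * (5831 / 5832) ^ (n / q) := by gcongr
    _ < 1 := by
      rw [mul_pow]
      nlinarith

end PMx

open PMx

/-- For every `β > 0` there is `t₁` such that every 3-graph on `t ≥ t₁` vertices with
`3 ∣ t` and minimum vertex degree at least `(5/9+β)·C(t-1,2)` has a perfect matching. -/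
theorem stmt_15 (β : ℝ) (hβ : 0 < β) :
    ∃ t₁ : ℕ, ∀ t : ℕ, t₁ ≤ t → 3 ∣ t →
    ∀ (V : Type) [DecidableEq V] [Fintype V], Fintype.card V = t →
    ∀ H : Finset (Finset V), (∀ e ∈ H, e.card = 3) →
    (∀ v : V, (5 / 9 + β) * ((t - 1).choose 2 : ℝ) ≤
      ((H.filter fun e => v ∈ e).card : ℝ)) →
    ∃ M : Finset (Finset V), M ⊆ H ∧ (M : Set (Finset V)).Pairwise Disjoint ∧
      ∀ v : V, ∃ e ∈ M, v ∈ e := by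
  obtain ⟨K, n₀, hnear⟩ := near_perfect (β / 4) (by positivity)
  obtain ⟨q₁, hq₁⟩ := exists_nat_gt (48 * K / β)
  set q := q₁ + 432 * K + 1 with hq
  obtain ⟨n₁, hn₁⟩ := exp_small q (by omega)
  obtain ⟨n₂, hn₂⟩ := exists_nat_gt ((10 / 3 + 6 * β) / β)
  refine ⟨2 * n₀ + n₁ + n₂ + 288, ?_⟩
  intro t ht h3 V _ _ hcard H hH hdeg
  subst hcard
  set t := Fintype.card V with ht'
  have hD : ∀ v, (5 / 9 + β / 2) * (t : ℝ) ^ 2 ≤ #(L H v) := by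
    intro v
    have h1 : (2 * #{e ∈ H | v ∈ e} : ℝ) ≤ #(L H v) := by exact_mod_cast two_deg hH v
    have h2 := hdeg v
    rw [Nat.cast_choose_two, Nat.cast_sub (by omega)] at h2
    have h4 : (10 / 3 + 6 * β) / β < t := hn₂.trans_le (by exact_mod_cast (by omega))
    rw [div_lt_iff₀ hβ] at h4
    have h5 : (288:ℝ) ≤ t := by exact_mod_cast (by omega)
    push_cast at h2
    nlinarith
  have hD5 : ∀ v, 5 * t ^ 2 ≤ 9 * #(L H v) := by
    intro v
    have := hD v
    have h' : (0:ℝ) ≤ β / 2 * (t:ℝ) ^ 2 := by positivity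
    have : (5 * t ^ 2 : ℝ) ≤ 9 * #(L H v) := by linarith
    exact_mod_cast this
  set l := t / q with hl
  have hql : q * l ≤ t := Nat.mul_div_le t q
  obtain ⟨A, hA1, hA2, hA3⟩ := absorb hH hD5 l (hn₁ t (by omega)) K (by
    rw [hq] at hql; nlinarith)
  have hAt : 2 * #A ≤ t := by rw [hq] at hql; nlinarith
  have hAβ : (#A : ℝ) ≤ β / 8 * t := by
    rw [div_lt_iff₀ hβ] at hq₁
    have h1 : (#A : ℝ) ≤ 6 * l * K := by exact_mod_cast hA1
    have h2 : (q₁ : ℝ) * l ≤ t := by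
      have : q₁ * l ≤ t := by rw [hq] at hql; nlinarith
      exact_mod_cast this
    have h3 : (0:ℝ) ≤ l := Nat.cast_nonneg _
    nlinarith [mul_le_mul_of_nonneg_right hq₁.le h3]
  set W := (univ : Finset V) \ A with hW
  have hWc : #W + #A = t := by
    rw [hW]; simpa using card_sdiff_add_card_eq_card (subset_univ A)
  obtain ⟨M, hMH, hMd, hMW, hMK⟩ := hnear V H W hH (by omega) (by
    intro v _
    have h1 := av_card (L H v) A
    have h2 : #(av (L H v) A) ≤ #{p ∈ W ×ˢ W | {v, p.1, p.2} ∈ H} := by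
      apply card_le_card
      intro p hp
      simp only [av, L, mem_filter, mem_univ, true_and] at hp
      simp [hW, hp]
    have h3 : (#(L H v) : ℝ) ≤ #{p ∈ W ×ˢ W | {v, p.1, p.2} ∈ H} + 2 * #A * t := by
      exact_mod_cast h1.trans (Nat.add_le_add_right h2 _)
    have h4 := hD v
    have h5 : (#W : ℝ) ≤ t := by exact_mod_cast (by omega)
    have h6 : (#W : ℝ) ^ 2 ≤ (t : ℝ) ^ 2 := by gcongr
    have h7 : (0:ℝ) ≤ t := Nat.cast_nonneg _
    nlinarith [mul_le_mul_of_nonneg_right hAβ h7])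
  set X := M.biUnion id with hX
  have hPX : PM H X := ⟨M, hMH, hMd, rfl⟩
  have dvd : ∀ S, PM H S → 3 ∣ #S := by
    rintro S ⟨N, hN, hNd, rfl⟩
    have hNd' : (N : Set (Finset V)).PairwiseDisjoint id := hNd
    rw [card_biUnion hNd']
    exact dvd_sum fun e he => by rw [id, hH e (hN he)]
  have hUc : #(W \ X) + #X = #W := card_sdiff_add_card_eq_card hMW
  have d1 := dvd _ hPX
  have d2 := dvd _ hA2
  obtain ⟨j, hj⟩ : 3 ∣ #(W \ X) := by omega
  have hAW : Disjoint W A := by rw [hW]; exact sdiff_disjoint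
  have hAU := hA3 j (by omega) (W \ X) (hAW.mono_left sdiff_subset) hj
  obtain ⟨N, hN1, hN2, hN3⟩ := hAU.union hPX (by
    rw [disjoint_union_left]
    exact ⟨(hAW.mono_left hMW).symm, sdiff_disjoint⟩)
  refine ⟨N, hN1, hN2, ?_⟩
  intro v
  have : v ∈ N.biUnion id := by
    rw [hN3]
    simp only [mem_union, mem_sdiff, hW, mem_univ, true_and]
    tauto
  simpa using this
end

section
/- For every λ > 0 and every integer t ≥ 13/λ there exists n_0 such that the following holds for all n ≥ n_0 with t | n. Let H be a 3-graph on n vertices with δ(H) ≥ (5/9 + λ)·C(n−1,2), and let V(H) = V_1 ∪ … ∪ V_t be a partition into t classes each of size n/t. Let D be the 3-graph on vertex set {1, …, t} whose edges are all triples {i_1, i_2, i_3} with d_H(V_{i_1}, V_{i_2}, V_{i_3}) ≥ λ/12. Then δ(D) ≥ (5/9 + (2/3)λ)·t²/2. -/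
open Finset
open scoped Classical

/-- The number of edges of the 3-graph `H` with one vertex in each of the (disjoint)
sets `A`, `B`, `C`. -/
noncomputable def eH {V : Type} [DecidableEq V] (H : Finset (Finset V))
    (A B C : Finset V) : ℕ :=
  ((A ×ˢ B ×ˢ C).filter fun x => ({x.1, x.2.1, x.2.2} : Finset V) ∈ H).card

/-- The density of the 3-graph `H` with respect to the triple `(A,B,C)`. -/
noncomputable def dH {V : Type} [DecidableEq V] (H : Finset (Finset V))
    (A B C : Finset V) : ℝ :=
  (eH H A B C : ℝ) / ((A.card : ℝ) * (B.card : ℝ) * (C.card : ℝ))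

lemma aux_deg {V : Type} [DecidableEq V] [Fintype V] (H : Finset (Finset V))
    (h3 : ∀ e ∈ H, e.card = 3) (v : V) :
    2 * (H.filter fun e => v ∈ e).card ≤
      (((Finset.univ : Finset V) ×ˢ (Finset.univ : Finset V)).filter
        fun x => ({v, x.1, x.2} : Finset V) ∈ H).card := by
  have hmaps : ∀ x ∈ ((Finset.univ : Finset V) ×ˢ (Finset.univ : Finset V)).filter
        (fun x => ({v, x.1, x.2} : Finset V) ∈ H),
      ({v, x.1, x.2} : Finset V) ∈ (H.filter fun e => v ∈ e) := by
    intro x hx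
    rw [Finset.mem_filter] at hx ⊢
    exact ⟨hx.2, by simp⟩
  rw [Finset.card_eq_sum_card_fiberwise (fun x hx => hmaps x hx), mul_comm, ← smul_eq_mul]
  apply Finset.card_nsmul_le_sum
  intro e he
  rw [Finset.mem_filter] at he
  have hc : (e.erase v).card = 2 := by
    rw [Finset.card_erase_of_mem he.2, h3 e he.1]
  obtain ⟨a, b, hab, heab⟩ := Finset.card_eq_two.mp hc
  have hea : ({v, a, b} : Finset V) = e := by
    rw [← Finset.insert_erase he.2, heab]
  have heb : ({v, b, a} : Finset V) = e := by
    rw [← hea, Finset.pair_comm]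
  have : ({(a, b), (b, a)} : Finset (V × V)).card = 2 := by
    apply Finset.card_pair
    intro h
    exact hab (Prod.ext_iff.mp h).1
  rw [← this]
  apply Finset.card_le_card
  intro x hx
  simp only [Finset.mem_insert, Finset.mem_singleton] at hx
  rcases hx with rfl | rfl
  · simp [hea, he.1]
  · simp [heb, he.1]

lemma aux_sum {V : Type} [DecidableEq V] [Fintype V] (H : Finset (Finset V)) (t : ℕ)
    (P : Fin t → Finset V) (hcov : ∀ v : V, ∃ i, v ∈ P i) (A : Finset V) :
    ∑ v ∈ A, (((Finset.univ : Finset V) ×ˢ (Finset.univ : Finset V)).filter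
        fun x => ({v, x.1, x.2} : Finset V) ∈ H).card ≤
      ∑ p : Fin t × Fin t, eH H A (P p.1) (P p.2) := by
  have h1 : ∑ v ∈ A, (((Finset.univ : Finset V) ×ˢ (Finset.univ : Finset V)).filter
        fun x => ({v, x.1, x.2} : Finset V) ∈ H).card =
      ((A ×ˢ (Finset.univ : Finset V) ×ˢ (Finset.univ : Finset V)).filter
        fun x => ({x.1, x.2.1, x.2.2} : Finset V) ∈ H).card := by
    simp only [Finset.card_filter]
    rw [Finset.sum_product]
  rw [h1]
  unfold eH
  refine le_trans (Finset.card_le_card ?_) Finset.card_biUnion_le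
  intro x hx
  obtain ⟨j, hj⟩ := hcov x.2.1
  obtain ⟨l, hl⟩ := hcov x.2.2
  simp only [Finset.mem_filter, Finset.mem_product, Finset.mem_univ, and_true] at hx
  simp only [Finset.mem_biUnion, Finset.mem_filter, Finset.mem_product, Finset.mem_univ, true_and]
  exact ⟨(j, l), ⟨hx.1, hj, hl⟩, hx.2⟩

lemma aux_pairs (t : ℕ) (i : Fin t) (Q : Fin t → Fin t → Prop) :
    ((Finset.univ : Finset (Fin t × Fin t)).filter
      fun p => p.1 ≠ i ∧ p.2 ≠ i ∧ p.1 ≠ p.2 ∧ Q p.1 p.2).card ≤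
    2 * ((((Finset.univ : Finset (Fin t)).erase i).powersetCard 2).filter fun s =>
            ∃ j ∈ s, ∃ l ∈ s, j ≠ l ∧ Q j l).card := by
  apply Finset.card_le_mul_card_image_of_maps_to (f := fun p => ({p.1, p.2} : Finset (Fin t)))
  · rintro ⟨j, l⟩ hp
    simp only [Finset.mem_filter, Finset.mem_univ, true_and] at hp
    obtain ⟨h1, h2, h3, h4⟩ := hp
    rw [Finset.mem_filter, Finset.mem_powersetCard]
    refine ⟨⟨?_, Finset.card_pair h3⟩, j, by simp, l, by simp, h3, h4⟩
    intro x hx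
    simp only [Finset.mem_insert, Finset.mem_singleton] at hx
    rcases hx with rfl | rfl <;> simp [h1, h2]
  · intro s hs
    rw [Finset.mem_filter, Finset.mem_powersetCard] at hs
    obtain ⟨a, b, hab, rfl⟩ := Finset.card_eq_two.mp hs.1.2
    refine le_trans (Finset.card_le_card (t := {(a, b), (b, a)}) ?_) Finset.card_le_two
    rintro ⟨j, l⟩ hp
    simp only [Finset.mem_filter, Finset.mem_univ, true_and] at hp
    obtain ⟨⟨-, -, h3, -⟩, h⟩ := hp
    have hj : j ∈ ({a, b} : Finset (Fin t)) := h ▸ (by simp)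
    have hl : l ∈ ({a, b} : Finset (Fin t)) := h ▸ (by simp)
    simp only [Finset.mem_insert, Finset.mem_singleton] at hj hl
    rcases hj with rfl | rfl <;> rcases hl with rfl | rfl <;> simp_all

lemma aux_eH {V : Type} [DecidableEq V] (H : Finset (Finset V)) (A B C : Finset V) :
    eH H A B C ≤ A.card * (B.card * C.card) := by
  unfold eH
  refine (Finset.card_filter_le _ _).trans ?_
  simp [Finset.card_product]

lemma aux_arith (lam t m D n : ℝ) (hlam : 0 < lam) (hlt : 13 ≤ lam * t) (ht : 0 < t)
    (hm : 12 * (5 / 9 + lam) ≤ m) (hn : n = m * t)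
    (h : m * ((5 / 9 + lam) * ((n - 1) * (n - 2))) ≤
      m ^ 3 * (3 * t + 2 * D + lam / 12 * t ^ 2)) :
    (5 / 9 + 2 / 3 * lam) * t ^ 2 / 2 ≤ D := by
  have hm0 : 0 < m := by linarith
  have h1 : (5 / 9 + lam) * ((n - 1) * (n - 2)) ≤
      m ^ 2 * (3 * t + 2 * D + lam / 12 * t ^ 2) := by
    refine le_of_mul_le_mul_left ?_ hm0
    linarith
  have h2 : m ^ 2 * ((5 / 9 + lam) * t ^ 2 - t / 4) ≤ (5 / 9 + lam) * ((n - 1) * (n - 2)) := by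
    have : 12 * (5 / 9 + lam) * (m * t) ≤ m * (m * t) :=
      mul_le_mul_of_nonneg_right hm (by positivity)
    subst hn
    nlinarith
  have h3 : (5 / 9 + lam) * t ^ 2 - t / 4 ≤ 3 * t + 2 * D + lam / 12 * t ^ 2 :=
    le_of_mul_le_mul_left (h2.trans h1) (by positivity)
  nlinarith

/-- For `λ > 0`, `t ≥ 13/λ`, all large `n` divisible by `t`, every 3-graph `H` on `n`
vertices with minimum vertex degree at least `(5/9+λ)·C(n-1,2)` and every partition of
its vertex set into `t` classes of size `n/t`, the auxiliary 3-graph `D` on the index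
set, whose edges are the triples of classes of `H`-density at least `λ/12`, has minimum
degree at least `(5/9 + (2/3)λ)·t²/2`. -/
theorem stmt_16 (lam : ℝ) (hlam : 0 < lam) (t : ℕ) (ht : (13 : ℝ) / lam ≤ (t : ℝ)) :
    ∃ n₀ : ℕ, ∀ n : ℕ, n₀ ≤ n → t ∣ n →
    ∀ (V : Type) [DecidableEq V] [Fintype V], Fintype.card V = n →
    ∀ H : Finset (Finset V), (∀ e ∈ H, e.card = 3) →
    (∀ v : V, (5 / 9 + lam) * ((n - 1).choose 2 : ℝ) ≤
      ((H.filter fun e => v ∈ e).card : ℝ)) →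
    ∀ P : Fin t → Finset V,
      (∀ i j, i ≠ j → Disjoint (P i) (P j)) →
      (∀ v : V, ∃ i, v ∈ P i) →
      (∀ i, (P i).card = n / t) →
      ∀ i : Fin t,
        (5 / 9 + 2 / 3 * lam) * (t : ℝ) ^ 2 / 2 ≤
          (((((Finset.univ : Finset (Fin t)).erase i).powersetCard 2).filter fun s =>
            ∃ j ∈ s, ∃ l ∈ s, j ≠ l ∧ lam / 12 ≤ dH H (P i) (P j) (P l)).card : ℝ) := by
  have ht0 : (0 : ℝ) < t := lt_of_lt_of_le (by positivity) ht
  have htn : 0 < t := by exact_mod_cast ht0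
  have hlt : 13 ≤ lam * t := by
    rw [div_le_iff₀ hlam] at ht
    linarith
  refine ⟨t * ⌈12 * (5 / 9 + lam)⌉₊, ?_⟩
  rintro n hn ⟨m, rfl⟩ V _ _ hV H h3 hdeg P hdisj hcov hcard i
  have hmn : ⌈12 * (5 / 9 + lam)⌉₊ ≤ m := Nat.le_of_mul_le_mul_left hn htn
  have hm : 12 * (5 / 9 + lam) ≤ (m : ℝ) := Nat.ceil_le.mp hmn
  have hm0 : (0 : ℝ) < m := by linarith
  have hmn0 : 0 < m := by exact_mod_cast hm0
  have hc : ∀ j, (P j).card = m := by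
    intro j
    rw [hcard j, Nat.mul_div_cancel_left _ htn]
  have hN : 1 ≤ t * m := Nat.mul_pos htn hmn0
  have hch : (((t * m - 1).choose 2 : ℕ) : ℝ) =
      ((t * m : ℝ) - 1) * ((t * m : ℝ) - 2) / 2 := by
    rw [Nat.cast_choose_two, Nat.cast_sub hN]
    push_cast
    ring
  set D := (((((Finset.univ : Finset (Fin t)).erase i).powersetCard 2).filter fun s =>
            ∃ j ∈ s, ∃ l ∈ s, j ≠ l ∧ lam / 12 ≤ dH H (P i) (P j) (P l)).card : ℝ) with hD
  refine aux_arith lam t m D (m * t) hlam hlt ht0 hm rfl ?_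
  have hlow : (m : ℝ) * ((5 / 9 + lam) * (((m : ℝ) * t - 1) * ((m : ℝ) * t - 2))) ≤
      ((∑ v ∈ P i, (((Finset.univ : Finset V) ×ˢ (Finset.univ : Finset V)).filter
        fun x => ({v, x.1, x.2} : Finset V) ∈ H).card : ℕ) : ℝ) := by
    have hs : ∀ v ∈ P i, (5 / 9 + lam) * (((m : ℝ) * t - 1) * ((m : ℝ) * t - 2)) ≤
        (((((Finset.univ : Finset V) ×ˢ (Finset.univ : Finset V)).filter
        fun x => ({v, x.1, x.2} : Finset V) ∈ H).card : ℕ) : ℝ) := by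
      intro v _
      have h1 : ((2 * (H.filter fun e => v ∈ e).card : ℕ) : ℝ) ≤ _ :=
        Nat.cast_le.mpr (aux_deg H h3 v)
      refine le_trans ?_ h1
      have h2 := hdeg v
      rw [hch] at h2
      push_cast
      nlinarith
    have h4 := Finset.card_nsmul_le_sum _ _ _ hs
    rw [hc i, nsmul_eq_mul] at h4
    rw [Nat.cast_sum]
    exact h4
  refine hlow.trans ((Nat.cast_le.mpr (aux_sum H t P hcov (P i))).trans ?_)
  rw [Nat.cast_sum]
  have hpt : ∀ p ∈ (Finset.univ : Finset (Fin t × Fin t)),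
      (eH H (P i) (P p.1) (P p.2) : ℝ) ≤ (m : ℝ) ^ 3 *
        ((if p.1 = i then (1 : ℝ) else 0) + (if p.2 = i then (1 : ℝ) else 0) +
         (if p.1 = p.2 then (1 : ℝ) else 0) +
         (if p.1 ≠ i ∧ p.2 ≠ i ∧ p.1 ≠ p.2 ∧ lam / 12 ≤ dH H (P i) (P p.1) (P p.2)
          then (1 : ℝ) else 0) + lam / 12) := by
    intro p _
    have hle : (eH H (P i) (P p.1) (P p.2) : ℝ) ≤ (m : ℝ) ^ 3 := by
      have := aux_eH H (P i) (P p.1) (P p.2)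
      rw [hc, hc, hc] at this
      have h5 : (eH H (P i) (P p.1) (P p.2) : ℝ) ≤ ((m * (m * m) : ℕ) : ℝ) :=
        Nat.cast_le.mpr this
      refine h5.trans (le_of_eq ?_)
      push_cast
      ring
    have hm3 : (0 : ℝ) < (m : ℝ) ^ 3 := by positivity
    have key : ∀ a : ℝ, 1 ≤ a → (eH H (P i) (P p.1) (P p.2) : ℝ) ≤ (m : ℝ) ^ 3 * a := by
      intro a ha
      nlinarith
    by_cases c1 : p.1 = i
    · apply key
      rw [if_pos c1]
      have a1 : (0 : ℝ) ≤ (if p.2 = i then (1 : ℝ) else 0) := by positivity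
      have a2 : (0 : ℝ) ≤ (if p.1 = p.2 then (1 : ℝ) else 0) := by positivity
      rw [if_neg (fun h : p.1 ≠ i ∧ p.2 ≠ i ∧ p.1 ≠ p.2 ∧ lam / 12 ≤ dH H (P i) (P p.1) (P p.2) => h.1 c1)]
      linarith
    by_cases c2 : p.2 = i
    · apply key
      rw [if_pos c2, if_neg c1]
      have a2 : (0 : ℝ) ≤ (if p.1 = p.2 then (1 : ℝ) else 0) := by positivity
      rw [if_neg (fun h : p.1 ≠ i ∧ p.2 ≠ i ∧ p.1 ≠ p.2 ∧ lam / 12 ≤ dH H (P i) (P p.1) (P p.2) => h.2.1 c2)]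
      linarith
    by_cases c3 : p.1 = p.2
    · apply key
      rw [if_pos c3, if_neg c1, if_neg c2, if_neg (fun h => h.2.2.1 c3)]
      linarith
    by_cases c4 : lam / 12 ≤ dH H (P i) (P p.1) (P p.2)
    · apply key
      rw [if_neg c3, if_neg c1, if_neg c2, if_pos ⟨c1, c2, c3, c4⟩]
      linarith
    · rw [if_neg c3, if_neg c1, if_neg c2, if_neg (fun h => c4 h.2.2.2)]
      push Not at c4
      unfold dH at c4
      rw [hc, hc, hc, div_lt_iff₀ (by positivity)] at c4
      nlinarith
  refine (Finset.sum_le_sum hpt).trans ?_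
  rw [← Finset.mul_sum]
  refine mul_le_mul_of_nonneg_left ?_ (by positivity)
  simp only [Finset.sum_add_distrib]
  have s1 : ∑ p : Fin t × Fin t, (if p.1 = i then (1 : ℝ) else 0) = t := by
    rw [Fintype.sum_prod_type_right]
    simp
  have s2 : ∑ p : Fin t × Fin t, (if p.2 = i then (1 : ℝ) else 0) = t := by
    rw [Fintype.sum_prod_type]
    simp
  have s3 : ∑ p : Fin t × Fin t, (if p.1 = p.2 then (1 : ℝ) else 0) = t := by
    rw [Fintype.sum_prod_type]
    simp
  have s5 : ∑ p : Fin t × Fin t, lam / 12 = lam / 12 * (t : ℝ) ^ 2 := by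
    simp
    ring
  have s4 : ∑ p : Fin t × Fin t,
      (if p.1 ≠ i ∧ p.2 ≠ i ∧ p.1 ≠ p.2 ∧ lam / 12 ≤ dH H (P i) (P p.1) (P p.2)
          then (1 : ℝ) else 0) ≤ 2 * D := by
    rw [Finset.sum_boole, hD]
    exact_mod_cast aux_pairs t i (fun j l => lam / 12 ≤ dH H (P i) (P j) (P l))
  rw [s1, s2, s3, s5]
  linarith
end

section
/- For every λ > 0, every ε with 0 < ε ≤ λ²/400, and every integer L ≥ 1, there exists m_0 such that the following holds. Let H be a 3-partite 3-graph with parts V_1, V_2, V_3, each of size m ≥ m_0, which is ε-regular and has density d_H(V_1, V_2, V_3) ≥ λ/12. Then H contains a family Q of pairwise vertex-disjoint copies of K_{L,L,L} with |Q|·L ≥ (1 − ε)·m. -/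
open Finset
open scoped Classical

/-- The 3-partite 3-graph `H[V1,V2,V3]` is `ε`-regular. -/
def EpsRegular {V : Type} [DecidableEq V] (ε : ℝ) (H : Finset (Finset V))
    (V1 V2 V3 : Finset V) : Prop :=
  ∀ A1 ⊆ V1, ∀ A2 ⊆ V2, ∀ A3 ⊆ V3,
    ε * (V1.card : ℝ) ≤ (A1.card : ℝ) → ε * (V2.card : ℝ) ≤ (A2.card : ℝ) →
    ε * (V3.card : ℝ) ≤ (A3.card : ℝ) →
    |dH H A1 A2 A3 - dH H V1 V2 V3| ≤ ε

/-- The (ordered) copies of `K_{h,h,h}` in a 3-graph `H`. -/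
noncomputable def tripartiteCopies {V : Type} [DecidableEq V] [Fintype V]
    (H : Finset (Finset V)) (h : ℕ) : Finset (Finset V × Finset V × Finset V) :=
  Finset.univ.filter fun T =>
    T.1.card = h ∧ T.2.1.card = h ∧ T.2.2.card = h ∧
    Disjoint T.1 T.2.1 ∧ Disjoint T.1 T.2.2 ∧ Disjoint T.2.1 T.2.2 ∧
    ∀ a ∈ T.1, ∀ b ∈ T.2.1, ∀ c ∈ T.2.2, ({a, b, c} : Finset V) ∈ H

lemma markov_aux {α : Type*} (X : Finset α) (f : α → ℝ) (M c : ℝ) (hM : 0 ≤ M) (hc : 0 ≤ c)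
    (hf : ∀ x ∈ X, f x ≤ M) (hs : 2 * c * X.card ≤ ∑ x ∈ X, f x) :
    c * X.card ≤ ((X.filter fun x => c ≤ f x).card : ℝ) * M := by
  have h1 : ∑ x ∈ X, f x ≤ ∑ x ∈ X, (c + if c ≤ f x then M else 0) := by
    apply Finset.sum_le_sum
    intro x hx
    have := hf x hx
    split_ifs with h <;> linarith
  rw [Finset.sum_add_distrib, ← Finset.sum_filter] at h1
  simp only [Finset.sum_const, nsmul_eq_mul] at h1
  linarith

lemma card_pairs_aux {α β : Type*} (X : Finset α) (Y : Finset β) (R : α → β → Prop) :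
    ((X ×ˢ Y).filter fun p => R p.1 p.2).card = ∑ x ∈ X, (Y.filter fun y => R x y).card := by
  simp only [Finset.card_filter, Finset.sum_product]

lemma kst_aux (δ : ℝ) (hδ : 0 < δ) (L : ℕ) : ∃ δ' : ℝ, 0 < δ' ∧ ∃ N : ℕ,
    ∀ (α β : Type) (X : Finset α) (Y : Finset β) (R : α → β → Prop), N ≤ X.card →
      δ * X.card * Y.card ≤ (((X ×ˢ Y).filter fun p => R p.1 p.2).card : ℝ) →
      ∃ S ⊆ X, S.card = L ∧ δ' * Y.card ≤ ((Y.filter fun y => ∀ x ∈ S, R x y).card : ℝ) := by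
  obtain ⟨N0, hN0⟩ := exists_nat_ge (4 * (L + 1) / δ)
  obtain ⟨N, hN⟩ := exists_nat_ge (2 * N0 / δ)
  have hN0' : 4 * ((L : ℝ) + 1) ≤ N0 * δ := by rwa [div_le_iff₀ hδ] at hN0
  have hN' : 2 * (N0 : ℝ) ≤ N * δ := by rwa [div_le_iff₀ hδ] at hN
  have hN0pos : (0 : ℝ) < N0 := by
    by_contra h
    have : (0 : ℝ) ≤ L := by positivity
    nlinarith
  refine ⟨δ / 4 / 2 ^ N0, by positivity, N + L, ?_⟩
  intro α β X Y R hX hE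
  rcases Y.eq_empty_or_nonempty with rfl | hY
  · obtain ⟨S, hS, hSc⟩ := Finset.exists_subset_card_eq (show L ≤ X.card by omega)
    exact ⟨S, hS, hSc, by simp⟩
  have hYp : (0 : ℝ) < Y.card := by exact_mod_cast hY.card_pos
  rw [card_pairs_aux] at hE
  push_cast at hE
  have m1 := markov_aux X (fun x => ((Y.filter fun y => R x y).card : ℝ)) Y.card (δ / 2 * Y.card)
    (by positivity) (by positivity)
    (fun x _ => by exact_mod_cast Finset.card_filter_le _ _) (by linarith)
  set X2 := X.filter fun x => δ / 2 * (Y.card : ℝ) ≤ ((Y.filter fun y => R x y).card : ℝ) with hX2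
  have hX2c : N0 ≤ X2.card := by
    have h1 : δ / 2 * X.card ≤ X2.card := by
      by_contra h
      push Not at h
      nlinarith
    have h2 : (N : ℝ) ≤ X.card := by exact_mod_cast (by omega : N ≤ X.card)
    have : (N0 : ℝ) ≤ X2.card := by nlinarith
    exact_mod_cast this
  obtain ⟨X', hX', hX'c⟩ := Finset.exists_subset_card_eq hX2c
  have hsum : ∑ y ∈ Y, ((X'.filter fun x => R x y).card : ℝ)
      = ∑ x ∈ X', ((Y.filter fun y => R x y).card : ℝ) := by
    simp only [Finset.card_filter, Nat.cast_sum]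
    exact Finset.sum_comm
  have hlow : (N0 : ℝ) * (δ / 2 * Y.card) ≤ ∑ x ∈ X', ((Y.filter fun y => R x y).card : ℝ) := by
    have := Finset.card_nsmul_le_sum X' (fun x => ((Y.filter fun y => R x y).card : ℝ))
      (δ / 2 * Y.card) (fun x hx => (Finset.mem_filter.1 (hX' hx)).2)
    rwa [hX'c, nsmul_eq_mul] at this
  have m2 := markov_aux Y (fun y => ((X'.filter fun x => R x y).card : ℝ)) N0 (N0 * δ / 4)
    (by positivity) (by positivity)
    (fun y _ => by rw [← hX'c]; exact_mod_cast Finset.card_filter_le _ _)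
    (by rw [hsum]; linarith)
  set G := Y.filter fun y => N0 * δ / 4 ≤ ((X'.filter fun x => R x y).card : ℝ) with hG
  have hGc : δ / 4 * Y.card ≤ G.card := by
    by_contra h
    push Not at h
    nlinarith
  have hcov : G ⊆ (X'.powersetCard L).biUnion fun S => Y.filter fun y => ∀ x ∈ S, R x y := by
    intro y hy
    rw [hG, Finset.mem_filter] at hy
    have hL' : L ≤ (X'.filter fun x => R x y).card := by
      have : (L : ℝ) ≤ (X'.filter fun x => R x y).card := by linarith [hy.2]
      exact_mod_cast this
    obtain ⟨S, hS, hSc⟩ := Finset.exists_subset_card_eq hL'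
    rw [Finset.mem_biUnion]
    refine ⟨S, Finset.mem_powersetCard.2 ⟨hS.trans (Finset.filter_subset _ _), hSc⟩, ?_⟩
    exact Finset.mem_filter.2 ⟨hy.1, fun x hx => (Finset.mem_filter.1 (hS hx)).2⟩
  have hsumc : (G.card : ℝ) ≤ ∑ S ∈ X'.powersetCard L,
      ((Y.filter fun y => ∀ x ∈ S, R x y).card : ℝ) := by
    exact_mod_cast (Finset.card_le_card hcov).trans Finset.card_biUnion_le
  by_contra hcon
  push Not at hcon
  have hLN : L ≤ X'.card := by
    have hd : 4 * ((L : ℝ) + 1) ≤ N0 * δ := hN0'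
    have hGpos : (0 : ℝ) < G.card := lt_of_lt_of_le (by positivity) hGc
    have hGne : G.Nonempty := by
      rw [← Finset.card_pos]; exact_mod_cast hGpos
    obtain ⟨y, hy⟩ := hGne
    obtain ⟨S, hS, -⟩ := Finset.mem_biUnion.1 (hcov hy)
    rw [Finset.mem_powersetCard] at hS
    rw [← hS.2]; exact Finset.card_le_card hS.1
  have hlt : ∑ S ∈ X'.powersetCard L, ((Y.filter fun y => ∀ x ∈ S, R x y).card : ℝ)
      < ∑ S ∈ X'.powersetCard L, δ / 4 / 2 ^ N0 * (Y.card : ℝ) := by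
    apply Finset.sum_lt_sum_of_nonempty
    · exact Finset.powersetCard_nonempty.2 hLN
    · intro S hS
      rw [Finset.mem_powersetCard] at hS
      exact hcon S (hS.1.trans (hX'.trans (Finset.filter_subset _ _))) hS.2
  rw [Finset.sum_const, nsmul_eq_mul] at hlt
  have hpc : ((X'.powersetCard L).card : ℝ) ≤ 2 ^ N0 := by
    have : (X'.powersetCard L).card ≤ 2 ^ N0 := by
      rw [Finset.card_powersetCard, hX'c]; exact Nat.choose_le_two_pow _ _
    exact_mod_cast this
  have : ((X'.powersetCard L).card : ℝ) * (δ / 4 / 2 ^ N0 * (Y.card : ℝ))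
      ≤ 2 ^ N0 * (δ / 4 / 2 ^ N0 * (Y.card : ℝ)) := by gcongr
  have e : (2 : ℝ) ^ N0 * (δ / 4 / 2 ^ N0 * (Y.card : ℝ)) = δ / 4 * Y.card := by field_simp
  linarith

lemma erdos_aux (δ : ℝ) (hδ : 0 < δ) (L : ℕ) : ∃ N : ℕ,
    ∀ (V : Type) (A B C : Finset V) (R : V → V → V → Prop),
      N ≤ A.card → N ≤ B.card → N ≤ C.card →
      δ * A.card * B.card * C.card ≤
        (((A ×ˢ B ×ˢ C).filter fun x => R x.1 x.2.1 x.2.2).card : ℝ) →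
      ∃ S ⊆ A, ∃ T ⊆ B, ∃ U ⊆ C, S.card = L ∧ T.card = L ∧ U.card = L ∧
        ∀ a ∈ S, ∀ b ∈ T, ∀ c ∈ U, R a b c := by
  obtain ⟨δ1, h1, N1, H1⟩ := kst_aux δ hδ L
  obtain ⟨δ2, h2, N2, H2⟩ := kst_aux δ1 h1 L
  obtain ⟨N3, hN3⟩ := exists_nat_ge (L / δ2)
  rw [div_le_iff₀ h2] at hN3
  refine ⟨N1 + N2 + N3, ?_⟩
  intro V A B C R hA hB hC hE
  obtain ⟨S, hS, hSc, hS'⟩ := H1 V (V × V) A (B ×ˢ C) (fun a p => R a p.1 p.2) (by omega)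
    (by rw [Finset.card_product]; push_cast; linarith)
  obtain ⟨T, hT, hTc, hT'⟩ := H2 V V B C (fun b c => ∀ x ∈ S, R x b c) (by omega)
    (by rw [Finset.card_product] at hS'; push_cast at hS'; rw [← mul_assoc] at hS'; convert hS')
  have hLc : L ≤ (C.filter fun c => ∀ b ∈ T, ∀ x ∈ S, R x b c).card := by
    have h3 : (N3 : ℝ) ≤ C.card := by exact_mod_cast (by omega : N3 ≤ C.card)
    have : (L : ℝ) ≤ (C.filter fun c => ∀ b ∈ T, ∀ x ∈ S, R x b c).card := by
      refine le_trans (?_ : (L : ℝ) ≤ δ2 * C.card) (hT'.trans (le_of_eq (by congr!)))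
      nlinarith
    exact_mod_cast this
  obtain ⟨U, hU, hUc⟩ := Finset.exists_subset_card_eq hLc
  exact ⟨S, hS, T, hT, U, hU.trans (Finset.filter_subset _ _), hSc, hTc, hUc,
    fun a ha b hb c hc => (Finset.mem_filter.1 (hU hc)).2 b hb a ha⟩

/-- Every `ε`-regular 3-partite 3-graph with parts of size `m` (large) and density at
least `λ/12`, where `0 < ε ≤ λ²/400`, contains a family `Q` of pairwise vertex-disjoint
copies of `K_{L,L,L}` with `|Q|·L ≥ (1-ε)·m`. -/
theorem stmt_18 (lam ε : ℝ) (hlam : 0 < lam) (hε0 : 0 < ε) (hε : ε ≤ lam ^ 2 / 400)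
    (L : ℕ) (hL : 1 ≤ L) :
    ∃ m₀ : ℕ, ∀ m : ℕ, m₀ ≤ m →
    ∀ (V : Type) [DecidableEq V] [Fintype V], ∀ V1 V2 V3 : Finset V,
      V1.card = m → V2.card = m → V3.card = m →
      Disjoint V1 V2 → Disjoint V1 V3 → Disjoint V2 V3 →
      ∀ H : Finset (Finset V),
        (∀ e ∈ H, ∃ a ∈ V1, ∃ b ∈ V2, ∃ c ∈ V3, e = {a, b, c}) →
        EpsRegular ε H V1 V2 V3 →
        lam / 12 ≤ dH H V1 V2 V3 →
        ∃ (q : ℕ) (Q : Fin q → Finset V × Finset V × Finset V),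
          (∀ k, Q k ∈ tripartiteCopies H L) ∧
          (∀ k l, k ≠ l →
            Disjoint ((Q k).1 ∪ (Q k).2.1 ∪ (Q k).2.2)
              ((Q l).1 ∪ (Q l).2.1 ∪ (Q l).2.2)) ∧
          (1 - ε) * (m : ℝ) ≤ (q : ℝ) * (L : ℝ) := by
  have hlamε : lam ≤ 12 → ε < lam / 12 := by intro h; nlinarith
  by_cases hl12 : 12 < lam
  · refine ⟨0, ?_⟩
    intro m _ V _ _ V1 V2 V3 h1 h2 h3 _ _ _ H _ _ hd
    exfalso
    have : dH H V1 V2 V3 ≤ 1 := by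
      unfold dH
      apply div_le_one_of_le₀ _ (by positivity)
      have : eH H V1 V2 V3 ≤ V1.card * (V2.card * V3.card) := by
        unfold eH
        refine (Finset.card_filter_le _ _).trans ?_
        rw [Finset.card_product, Finset.card_product]
      rw [mul_assoc]
      exact_mod_cast this
    linarith
  push Not at hl12
  have hgap := hlamε hl12
  obtain ⟨N, hN⟩ := erdos_aux (lam / 12 - ε) (by linarith) L
  obtain ⟨m₀, hm₀⟩ := exists_nat_ge (N / ε)
  rw [div_le_iff₀ hε0] at hm₀
  refine ⟨m₀ + 1, ?_⟩
  intro m hm V _ _ V1 V2 V3 h1 h2 h3 d12 d13 d23 H _ hreg hd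
  have hmR : (m₀ : ℝ) ≤ m := by exact_mod_cast (by omega : m₀ ≤ m)
  have hmpos : (0 : ℝ) < m := by exact_mod_cast (by omega : 0 < m)
  by_contra hcon
  have key : ∀ q : ℕ, ∃ Q : Fin q → Finset V × Finset V × Finset V,
      (∀ k, Q k ∈ tripartiteCopies H L) ∧
      (∀ k l, k ≠ l → Disjoint ((Q k).1 ∪ (Q k).2.1 ∪ (Q k).2.2)
              ((Q l).1 ∪ (Q l).2.1 ∪ (Q l).2.2)) ∧
      (∀ k, (Q k).1 ⊆ V1 ∧ (Q k).2.1 ⊆ V2 ∧ (Q k).2.2 ⊆ V3) := by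
    intro q
    induction q with
    | zero => exact ⟨fun k => k.elim0, fun k => k.elim0, fun k => k.elim0, fun k => k.elim0⟩
    | succ q ih =>
      obtain ⟨Q, hQ, hdis, hsub⟩ := ih
      have hlt : (q : ℝ) * L < (1 - ε) * m := by
        by_contra h
        push Not at h
        exact hcon ⟨q, Q, hQ, hdis, h⟩
      set W : Finset V := Finset.univ.biUnion fun k => (Q k).1 ∪ (Q k).2.1 ∪ (Q k).2.2 with hW
      have hcard : ∀ (P : Finset V) (g : Fin q → Finset V), P.card = m →
          (∀ k, (g k).card = L) →
          (∀ k, ∀ x ∈ P, x ∈ (Q k).1 ∪ (Q k).2.1 ∪ (Q k).2.2 → x ∈ g k) →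
          ε * m ≤ ((P \ W).card : ℝ) := by
        intro P g hP hg hx
        have hs : P ∩ W ⊆ Finset.univ.biUnion g := by
          intro x hxm
          rw [Finset.mem_inter, hW, Finset.mem_biUnion] at hxm
          obtain ⟨hxP, k, hk, hxk⟩ := hxm
          exact Finset.mem_biUnion.2 ⟨k, hk, hx k x hxP hxk⟩
        have hc : (P ∩ W).card ≤ q * L := by
          refine (Finset.card_le_card hs).trans (Finset.card_biUnion_le.trans ?_)
          simp [hg]
        have he := Finset.card_sdiff_add_card_inter P W
        have hc' : ((P ∩ W).card : ℝ) ≤ q * L := by exact_mod_cast hc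
        have he' : ((P \ W).card : ℝ) + (P ∩ W).card = m := by
          rw [← hP]; exact_mod_cast he
        linarith
      have hmem : ∀ k, (Q k).1.card = L ∧ (Q k).2.1.card = L ∧ (Q k).2.2.card = L := by
        intro k
        have := hQ k
        simp only [tripartiteCopies, Finset.mem_filter] at this
        exact ⟨this.2.1, this.2.2.1, this.2.2.2.1⟩
      have c1 := hcard V1 (fun k => (Q k).1) h1 (fun k => (hmem k).1) (by
        intro k x hx hxk
        rw [Finset.mem_union, Finset.mem_union] at hxk
        rcases hxk with (h | h) | h
        · exact h
        · exact absurd ((hsub k).2.1 h) (Finset.disjoint_left.1 d12 hx)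
        · exact absurd ((hsub k).2.2 h) (Finset.disjoint_left.1 d13 hx))
      have c2 := hcard V2 (fun k => (Q k).2.1) h2 (fun k => (hmem k).2.1) (by
        intro k x hx hxk
        rw [Finset.mem_union, Finset.mem_union] at hxk
        rcases hxk with (h | h) | h
        · exact absurd hx (Finset.disjoint_left.1 d12 ((hsub k).1 h))
        · exact h
        · exact absurd ((hsub k).2.2 h) (Finset.disjoint_left.1 d23 hx))
      have c3 := hcard V3 (fun k => (Q k).2.2) h3 (fun k => (hmem k).2.2) (by
        intro k x hx hxk
        rw [Finset.mem_union, Finset.mem_union] at hxk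
        rcases hxk with (h | h) | h
        · exact absurd hx (Finset.disjoint_left.1 d13 ((hsub k).1 h))
        · exact absurd hx (Finset.disjoint_left.1 d23 ((hsub k).2.1 h))
        · exact h)
      have hr := hreg (V1 \ W) Finset.sdiff_subset (V2 \ W) Finset.sdiff_subset
        (V3 \ W) Finset.sdiff_subset (by rw [h1]; exact c1) (by rw [h2]; exact c2)
        (by rw [h3]; exact c3)
      have hdd : lam / 12 - ε ≤ dH H (V1 \ W) (V2 \ W) (V3 \ W) := by
        linarith [(abs_le.1 hr).1]
      have hεm : 0 < ε * m := by positivity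
      have hNm : (N : ℝ) ≤ ε * m := by nlinarith
      have p1 := lt_of_lt_of_le hεm c1
      have p2 := lt_of_lt_of_le hεm c2
      have p3 := lt_of_lt_of_le hεm c3
      unfold dH at hdd
      rw [le_div_iff₀ (by positivity)] at hdd
      obtain ⟨S, hS, T, hT, U, hU, hSc, hTc, hUc, hR⟩ := hN V (V1 \ W) (V2 \ W) (V3 \ W)
        (fun a b c => ({a, b, c} : Finset V) ∈ H)
        (by exact_mod_cast hNm.trans c1) (by exact_mod_cast hNm.trans c2)
        (by exact_mod_cast hNm.trans c3)
        (by
          refine le_trans (le_of_eq (by ring)) (hdd.trans (le_of_eq ?_))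
          unfold eH
          congr!)
      have hSV := hS.trans Finset.sdiff_subset
      have hTV := hT.trans Finset.sdiff_subset
      have hUV := hU.trans Finset.sdiff_subset
      have hnew : ∀ k, Disjoint (S ∪ T ∪ U) ((Q k).1 ∪ (Q k).2.1 ∪ (Q k).2.2) := by
        intro k
        rw [Finset.disjoint_left]
        intro x hx hxk
        have hxW : x ∈ W := Finset.mem_biUnion.2 ⟨k, Finset.mem_univ _, hxk⟩
        rw [Finset.mem_union, Finset.mem_union] at hx
        rcases hx with (h | h) | h
        · exact (Finset.mem_sdiff.1 (hS h)).2 hxW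
        · exact (Finset.mem_sdiff.1 (hT h)).2 hxW
        · exact (Finset.mem_sdiff.1 (hU h)).2 hxW
      refine ⟨Fin.cons (S, T, U) Q, ?_, ?_, ?_⟩
      · intro k
        refine Fin.cases ?_ (fun k => ?_) k
        · rw [Fin.cons_zero]
          simp only [tripartiteCopies, Finset.mem_filter, Finset.mem_univ, true_and]
          exact ⟨hSc, hTc, hUc, d12.mono hSV hTV, d13.mono hSV hUV, d23.mono hTV hUV, hR⟩
        · rw [Fin.cons_succ]; exact hQ k
      · intro k l
        refine Fin.cases ?_ (fun k => ?_) k <;> refine Fin.cases ?_ (fun l => ?_) l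
        · intro h; exact absurd rfl h
        · intro _; rw [Fin.cons_zero, Fin.cons_succ]; exact hnew l
        · intro _; rw [Fin.cons_zero, Fin.cons_succ]; exact (hnew k).symm
        · intro h; rw [Fin.cons_succ, Fin.cons_succ]
          exact hdis k l (fun e => h (by rw [e]))
      · intro k
        refine Fin.cases ?_ (fun k => ?_) k
        · rw [Fin.cons_zero]; exact ⟨hSV, hTV, hUV⟩
        · rw [Fin.cons_succ]; exact hsub k
  obtain ⟨Q, hQ, hdis, -⟩ := key m
  refine hcon ⟨m, Q, hQ, hdis, ?_⟩
  have : (1 : ℝ) ≤ L := by exact_mod_cast hL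
  nlinarith
end

section
/- For every γ with 0 < γ ≤ 10^{−6}/3 there exists n_0 such that the following holds for all n ≥ n_0. Let H be a 3-graph on n vertices with δ(H) ≥ 0.8·C(n−1,2), and let R ⊆ V(H) satisfy: (a) γ²n/4 ≤ |R| ≤ γ²n/2; (b1) for every pair {u,v} ∈ G_{1/3} there are at least 0.333·|R| vertices w ∈ R with {u,v,w} ∈ H; (b2) for every vertex v there are at least 0.697·|R| vertices w ∈ R with {v,w} ∈ G_{1/3}; (c) the subhypergraph H[R] induced on R satisfies δ(H[R]) ≥ 0.7994·C(|R|,2). Let m ≤ γ³n + 1 be an integer and let e_1, …, e_m and f_1, …, f_m be pairwise disjoint ordered pairs of vertices of V(H) \ R whose underlying unordered pairs belong to G_{1/3}. Then there exist pairwise vertex-disjoint tight paths Π_1, …, Π_m in H, each of length 16, such that for i = 1, …, m the path Π_i has endpairs e_i and f_i and V(Π_i) \ (e_i ∪ f_i) ⊆ R. -/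
open Finset
open scoped Classical

/-- The co-degree of a pair of vertices in a 3-graph `H`. -/
def coDeg {V : Type} [DecidableEq V] (H : Finset (Finset V)) (u v : V) : ℕ :=
  (H.filter fun e => u ∈ e ∧ v ∈ e).card

/-- A tight path in a 3-graph `H`: a sequence of distinct vertices in which every three
consecutive vertices form an edge of `H`. -/
def IsTightPath {V : Type} [DecidableEq V] {t : ℕ} (H : Finset (Finset V))
    (w : Fin t → V) : Prop :=
  Function.Injective w ∧
    ∀ (i : ℕ) (hi : i + 2 < t),
      ({w ⟨i, by omega⟩, w ⟨i + 1, by omega⟩, w ⟨i + 2, by omega⟩} : Finset V) ∈ H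

section Helpers

set_option linter.unusedSectionVars false

variable {V : Type} [DecidableEq V]

lemma aux_pigeon {I J : Type} (s : Finset I) (t : Finset J) (P : I → J → Prop)
    [∀ i j, Decidable (P i j)] (c M : ℝ)
    (hc : 0 < c) (hM : 0 < M) (hs : 0 < (s.card : ℝ)) (ht : (t.card : ℝ) ≤ M)
    (h : ∀ i ∈ s, c * M ≤ ((t.filter fun j => P i j).card : ℝ)) :
    ∃ j ∈ t, c * s.card ≤ ((s.filter fun i => P i j).card : ℝ) := by
  by_contra hcon
  push Not at hcon
  have h1 : ∑ i ∈ s, (t.filter fun j => P i j).card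
      = ∑ j ∈ t, (s.filter fun i => P i j).card :=
    Finset.sum_card_bipartiteAbove_eq_sum_card_bipartiteBelow P
  have h1' : ∑ i ∈ s, ((t.filter fun j => P i j).card : ℝ)
      = ∑ j ∈ t, ((s.filter fun i => P i j).card : ℝ) := by exact_mod_cast h1
  have h2 : (s.card : ℝ) * (c * M) ≤ ∑ i ∈ s, ((t.filter fun j => P i j).card : ℝ) := by
    rw [← nsmul_eq_mul]
    exact Finset.card_nsmul_le_sum _ _ _ h
  have hpos : 0 < (s.card : ℝ) * (c * M) := by positivity
  have hne : t.Nonempty := by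
    rw [Finset.nonempty_iff_ne_empty]
    rintro rfl
    rw [h1', Finset.sum_empty] at h2
    linarith
  have h3 : ∑ j ∈ t, ((s.filter fun i => P i j).card : ℝ) < ∑ j ∈ t, c * (s.card : ℝ) :=
    Finset.sum_lt_sum_of_nonempty hne hcon
  rw [Finset.sum_const, nsmul_eq_mul] at h3
  have h4 : (t.card : ℝ) * (c * s.card) ≤ M * (c * s.card) := by gcongr
  nlinarith

lemma aux_sdiff_card (S F : Finset V) : (S.card : ℝ) - F.card ≤ ((S \ F).card : ℝ) := by
  have := Finset.le_card_sdiff F S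
  have h2 : S.card ≤ (S \ F).card + F.card := by omega
  have : (S.card : ℝ) ≤ (S \ F).card + F.card := by exact_mod_cast h2
  linarith

lemma aux_filter_sdiff (S F : Finset V) (P : V → Prop) [DecidablePred P] :
    ((S.filter P).card : ℝ) - F.card ≤ (((S \ F).filter P).card : ℝ) := by
  refine (aux_sdiff_card _ F).trans ?_
  gcongr
  intro x
  simp only [mem_sdiff, mem_filter]
  tauto

lemma aux_ext (E : V → V → V → Prop) (Lg : V → V → Prop) (R F : Finset V) (r : ℝ)
    (hr : (R.card : ℝ) = r) (hr0 : 0 ≤ r)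
    (hb1 : ∀ u v, Lg u v → 0.333 * r ≤ ((R.filter fun w => E u v w).card : ℝ))
    (hb2 : ∀ v, 0.697 * r ≤ ((R.filter fun w => Lg v w).card : ℝ))
    (hF : (F.card : ℝ) ≤ 1e-4 * r) (a b : V) (hab : Lg a b) :
    0.02 * r ≤ (((R \ F).filter fun x => E a b x ∧ Lg b x).card : ℝ) := by
  have h1 := hb1 a b hab
  have h2 := hb2 b
  have h3 := Finset.card_union_add_card_inter (R.filter fun w => E a b w) (R.filter fun w => Lg b w)
  have h4 : ((R.filter fun w => E a b w) ∪ (R.filter fun w => Lg b w)).card ≤ R.card := by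
    apply Finset.card_le_card
    intro x; simp only [mem_union, mem_filter]; tauto
  rw [← Finset.filter_and] at h3
  have h5 := aux_filter_sdiff R F (fun x => E a b x ∧ Lg b x)
  have h3' : (((R.filter fun w => E a b w) ∪ (R.filter fun w => Lg b w)).card : ℝ)
    + ((R.filter fun w => E a b w ∧ Lg b w).card : ℝ) = 
    ((R.filter fun w => E a b w).card : ℝ) + ((R.filter fun w => Lg b w).card : ℝ) := by
      exact_mod_cast h3
  have h4' : (((R.filter fun w => E a b w) ∪ (R.filter fun w => Lg b w)).card : ℝ) ≤ R.card := by
    exact_mod_cast h4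
  rw [hr] at h4'
  linarith

/-- sum of degrees = number of ordered pairs -/
lemma aux_pairs_sum (S T : Finset V) (L : V → V → Prop) :
    (((S ×ˢ T).filter fun z => L z.1 z.2).card : ℝ)
      = ∑ q ∈ S, ((T.filter fun w => L q w).card : ℝ) := by
  rw [Finset.card_filter, Finset.sum_product]
  push_cast [Finset.card_filter]
  rfl

lemma aux_G1 (S A : Finset V) (L : V → V → Prop) (hL : ∀ x y, L x y → L y x) (r : ℝ)
    (hr : 0 < r) (hS : (S.card : ℝ) ≤ r)
    (hd : 0.799 * r ^ 2 ≤ (((S ×ˢ S).filter fun z => L z.1 z.2).card : ℝ))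
    (hAS : A ⊆ S) (hA : 0.33 * r ≤ (A.card : ℝ)) :
    0.001 * r ^ 2 ≤ (((S ×ˢ S).filter fun z => z.1 ∈ A ∧ L z.1 z.2 ∧
      0.64 * r ≤ ((S.filter fun w => L z.2 w).card : ℝ)).card : ℝ) := by
  set D := S.filter fun q => 0.64 * r ≤ ((S.filter fun w => L q w).card : ℝ) with hD
  have hDS : D ⊆ S := Finset.filter_subset _ _
  set k : ℝ := ((A ∩ D).card : ℝ) with hk
  set X := (S ×ˢ S).filter fun z => z.1 ∈ A ∧ L z.1 z.2 ∧
      0.64 * r ≤ ((S.filter fun w => L z.2 w).card : ℝ) with hX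
  have hSA : ((S \ A).card : ℝ) = S.card - A.card := by
    rw [Finset.card_sdiff_of_subset hAS, Nat.cast_sub (Finset.card_le_card hAS)]
  have hSD : ((S \ D).card : ℝ) = S.card - D.card := by
    rw [Finset.card_sdiff_of_subset hDS, Nat.cast_sub (Finset.card_le_card hDS)]
  have hSA0 : (0 : ℝ) ≤ ((S \ A).card : ℝ) := by positivity
  have hSD0 : (0 : ℝ) ≤ ((S \ D).card : ℝ) := by positivity
  -- size of D
  have hDc : 0.4416 * r ≤ (D.card : ℝ) := by
    rw [aux_pairs_sum, ← Finset.sum_sdiff hDS] at hd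
    have h1 : ∑ q ∈ S \ D, ((S.filter fun w => L q w).card : ℝ) ≤ (S \ D).card * (0.64 * r) := by
      rw [← nsmul_eq_mul]
      apply Finset.sum_le_card_nsmul
      intro x hx
      simp only [hD, mem_sdiff, mem_filter, not_and, not_le] at hx
      exact (hx.2 hx.1).le
    have h2 : ∑ q ∈ D, ((S.filter fun w => L q w).card : ℝ) ≤ D.card * r := by
      rw [← nsmul_eq_mul]
      apply Finset.sum_le_card_nsmul
      intro x hx
      refine le_trans ?_ hS
      exact_mod_cast Finset.card_filter_le _ _
    rw [hSD] at h1
    have h3 : ((S.card : ℝ) - D.card) * (0.64 * r) ≤ (r - D.card) * (0.64 * r) := by gcongr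
    have h4 : (0.799 * r) * r ≤ (0.64 * r + 0.36 * D.card) * r := by nlinarith
    have h5 := le_of_mul_le_mul_right h4 hr
    linarith
  -- covering
  set X' := (S ×ˢ S).filter fun z => z.2 ∈ A ∧ L z.1 z.2 ∧
      0.64 * r ≤ ((S.filter fun w => L z.1 w).card : ℝ) with hX'
  have hXX : X'.card ≤ X.card := by
    apply Finset.card_le_card_of_injOn Prod.swap
    · intro z
      simp only [hX, hX', coe_filter, mem_product, Set.mem_ofPred_eq, Prod.fst_swap, Prod.snd_swap]
      rintro ⟨⟨h1, h2⟩, h3, h4, h5⟩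
      exact ⟨⟨h2, h1⟩, h3, hL _ _ h4, h5⟩
    · exact Prod.swap_injective.injOn
  have hcov : ((S ×ˢ S).filter fun z => L z.1 z.2) ⊆
      (((((S \ A) ×ˢ (S \ A)) ∪ ((S \ D) ×ˢ (S \ D))) ∪ (X ∪ X')) ∪ 
        (((A ∩ D) ×ˢ S) ∪ (S ×ˢ (A ∩ D)))) := by
    rintro ⟨p, q⟩ hz
    have hz1 := (Finset.mem_product.1 (Finset.mem_filter.1 hz).1).1
    have hz2 := (Finset.mem_product.1 (Finset.mem_filter.1 hz).1).2
    have hz3 := (Finset.mem_filter.1 hz).2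
    have hm1 : p ∈ A → q ∈ D → (p, q) ∈ X := fun h1 h2 =>
      Finset.mem_filter.2 ⟨Finset.mem_product.2 ⟨hz1, hz2⟩, h1, hz3, (Finset.mem_filter.1 h2).2⟩
    have hm2 : q ∈ A → p ∈ D → (p, q) ∈ X' := fun h1 h2 =>
      Finset.mem_filter.2 ⟨Finset.mem_product.2 ⟨hz1, hz2⟩, h1, hz3, (Finset.mem_filter.1 h2).2⟩
    clear_value X X' D
    simp only at hz1 hz2
    simp only [mem_union, mem_product, mem_sdiff, mem_inter, hz1, hz2]
    by_cases a1 : p ∈ A <;> by_cases a2 : q ∈ A <;> by_cases a3 : p ∈ D <;> by_cases a4 : q ∈ D <;>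
      simp [a1, a2, a3, a4] <;> simp_all
  have hcard := Finset.card_le_card hcov
  have hcard2 : ((S ×ˢ S).filter fun z => L z.1 z.2).card ≤
      (S \ A).card * (S \ A).card + (S \ D).card * (S \ D).card + (X.card + X'.card)
       + ((A ∩ D).card * S.card + S.card * (A ∩ D).card) := by
    refine hcard.trans ?_
    simp only [← Finset.card_product]
    refine (Finset.card_union_le _ _).trans (add_le_add ?_ (Finset.card_union_le _ _))
    refine (Finset.card_union_le _ _).trans (add_le_add (Finset.card_union_le _ _) 
      (Finset.card_union_le _ _))
  have hcard3 : (((S ×ˢ S).filter fun z => L z.1 z.2).card : ℝ) ≤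
      ((S \ A).card : ℝ) * (S \ A).card + (S \ D).card * (S \ D).card + (X.card + X'.card)
       + (k * S.card + S.card * k) := by
    rw [hk]
    exact_mod_cast hcard2
  have hXX' : (X'.card : ℝ) ≤ X.card := by exact_mod_cast hXX
  -- lower bound by k
  have hkX : k * (0.08 * r) ≤ X.card := by
    have h0 : (((A ∩ D) ×ˢ D).filter fun z => L z.1 z.2) ⊆ X := by
      intro z
      simp only [hX, hD, mem_filter, mem_product, mem_inter]
      tauto
    have h1 : ((((A ∩ D) ×ˢ D).filter fun z => L z.1 z.2).card : ℝ) ≤ X.card := by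
      exact_mod_cast Finset.card_le_card h0
    refine le_trans ?_ h1
    rw [aux_pairs_sum, hk, ← nsmul_eq_mul]
    apply Finset.card_nsmul_le_sum
    intro x hx
    have hxD : x ∈ D := (Finset.mem_inter.1 hx).2
    have hx2 := (Finset.mem_filter.1 hxD).2
    have h3 := aux_filter_sdiff S (S \ D) (fun w => L x w)
    rw [Finset.sdiff_sdiff_eq_self hDS, hSD] at h3
    linarith
  have hk0 : 0 ≤ k := by positivity
  have e1 : ((S \ A).card : ℝ) * (S \ A).card ≤ (0.67 * r) * (0.67 * r) := by
    have : ((S \ A).card : ℝ) ≤ 0.67 * r := by rw [hSA]; linarith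
    gcongr
  have e2 : ((S \ D).card : ℝ) * (S \ D).card ≤ (0.5584 * r) * (0.5584 * r) := by
    have : ((S \ D).card : ℝ) ≤ 0.5584 * r := by rw [hSD]; linarith
    gcongr
  have e3 : k * S.card ≤ k * r := by gcongr
  have e4 : (S.card : ℝ) * k ≤ r * k := by gcongr
  nlinarith

lemma aux_G2 (S B B' : Finset V) (L L' : V → V → Prop) (r : ℝ)
    (hr : 0 < r) (hS : (S.card : ℝ) ≤ r)
    (hd : 0.799 * r ^ 2 ≤ (((S ×ˢ S).filter fun z => L z.1 z.2).card : ℝ))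
    (hd' : 0.799 * r ^ 2 ≤ (((S ×ˢ S).filter fun z => L' z.1 z.2).card : ℝ))
    (hBS : B ⊆ S) (hB : 0.639 * r ≤ (B.card : ℝ)) (hBS' : B' ⊆ S) (hB' : 0.639 * r ≤ (B'.card : ℝ)) :
    0.006 * r ^ 2 ≤ (((S ×ˢ S).filter fun z => z.1 ∈ B ∧ z.2 ∈ B' ∧ L z.1 z.2 ∧ L' z.1 z.2).card : ℝ) := by
  set X := (S ×ˢ S).filter fun z => z.1 ∈ B ∧ z.2 ∈ B' ∧ L z.1 z.2 ∧ L' z.1 z.2 with hX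
  have hcov : B ×ˢ B' ⊆ X ∪ (((S ×ˢ S).filter fun z => ¬ L z.1 z.2) ∪ 
      ((S ×ˢ S).filter fun z => ¬ L' z.1 z.2)) := by
    intro z
    simp only [hX, mem_filter, mem_union, mem_product]
    rintro ⟨h1, h2⟩
    have := hBS h1
    have := hBS' h2
    tauto
  have h1 := (Finset.card_le_card hcov).trans ((Finset.card_union_le _ _).trans 
    (add_le_add_right (Finset.card_union_le _ _) _))
  rw [Finset.card_product] at h1
  have h2 := Finset.card_filter_add_card_filter_not (s := S ×ˢ S) (fun z => L z.1 z.2)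
  have h3 := Finset.card_filter_add_card_filter_not (s := S ×ˢ S) (fun z => L' z.1 z.2)
  rw [Finset.card_product] at h2 h3
  have h1' : (B.card : ℝ) * B'.card ≤ X.card + (((S ×ˢ S).filter fun z => ¬ L z.1 z.2).card + 
      ((S ×ˢ S).filter fun z => ¬ L' z.1 z.2).card) := by exact_mod_cast h1
  have h2' : (((S ×ˢ S).filter fun z => L z.1 z.2).card : ℝ) + 
     ((S ×ˢ S).filter fun z => ¬ L z.1 z.2).card = S.card * S.card := by exact_mod_cast h2
  have h3' : (((S ×ˢ S).filter fun z => L' z.1 z.2).card : ℝ) + 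
     ((S ×ˢ S).filter fun z => ¬ L' z.1 z.2).card = S.card * S.card := by exact_mod_cast h3
  have e1 : (S.card : ℝ) * S.card ≤ r * r := by gcongr
  have e2 : (0.639 * r) * (0.639 * r) ≤ (B.card : ℝ) * B'.card := by gcongr
  nlinarith

/-- density after deleting a small set -/
lemma aux_dens (R F : Finset V) (L : V → V → Prop) (r : ℝ) (hr : (R.card : ℝ) = r)
    (hr0 : 10000 ≤ r) (hF : (F.card : ℝ) ≤ 1e-4 * r)
    (hd : 0.7994 * (r * (r - 1)) ≤ (((R ×ˢ R).filter fun z => L z.1 z.2).card : ℝ)) :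
    0.799 * r ^ 2 ≤ ((((R \ F) ×ˢ (R \ F)).filter fun z => L z.1 z.2).card : ℝ) := by
  have hcov : ((R ×ˢ R).filter fun z => L z.1 z.2) ⊆ 
      (((R \ F) ×ˢ (R \ F)).filter fun z => L z.1 z.2) ∪ ((F ×ˢ R) ∪ (R ×ˢ F)) := by
    intro z
    simp only [mem_filter, mem_union, mem_product, mem_sdiff]
    tauto
  have h1 := (Finset.card_le_card hcov).trans ((Finset.card_union_le _ _).trans 
    (add_le_add_right (Finset.card_union_le _ _) _))
  rw [Finset.card_product, Finset.card_product] at h1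
  have h1' : (((R ×ˢ R).filter fun z => L z.1 z.2).card : ℝ) ≤ 
     (((R \ F) ×ˢ (R \ F)).filter fun z => L z.1 z.2).card + (F.card * R.card + R.card * F.card) := by
     exact_mod_cast h1
  rw [hr] at h1'
  have : (F.card : ℝ) * r ≤ 1e-4 * r * r := by gcongr
  nlinarith

/-- the 18-vertex sequence -/
def pathSeq (a b c d : V) (w : Fin 14 → V) : Fin 18 → V :=
  ![a, b, w 0, w 1, w 2, w 3, w 4, w 5, w 6, w 7, w 8, w 9, w 10, w 11, w 12, w 13, d, c]

lemma aux_pick (X F : Finset V) (h : (F.card : ℝ) < X.card) : ∃ x ∈ X, x ∉ F := by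
  apply Finset.exists_mem_notMem_of_card_lt_card
  exact_mod_cast h

end Helpers

set_option maxHeartbeats 1600000 in
lemma aux_core {V : Type} [DecidableEq V] (E : V → V → V → Prop) (Lg : V → V → Prop)
    (hE1 : ∀ x y z, E x y z → E y x z) (hE2 : ∀ x y z, E x y z → E x z y)
    (hE3 : ∀ x y z, E x y z → y ≠ z)
    (R F : Finset V) (r : ℝ)
    (hr : (R.card : ℝ) = r) (hr0 : 10 ^ 9 ≤ r)
    (hb1 : ∀ u v, Lg u v → 0.333 * r ≤ ((R.filter fun w => E u v w).card : ℝ))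
    (hb2 : ∀ v, 0.697 * r ≤ ((R.filter fun w => Lg v w).card : ℝ))
    (hc : ∀ x ∈ R, 0.7994 * (r * (r - 1)) ≤ (((R ×ˢ R).filter fun z => E x z.1 z.2).card : ℝ))
    (hF : (F.card : ℝ) + 30 ≤ 1e-4 * r) (a b c d : V) (hab : Lg a b) (hcd : Lg c d) :
    ∃ w : Fin 14 → V, Function.Injective w ∧ (∀ k, w k ∈ R ∧ w k ∉ F) ∧
      ∀ (i : ℕ) (hi : i + 2 < 18), E (pathSeq a b c d w ⟨i, by omega⟩)
        (pathSeq a b c d w ⟨i + 1, by omega⟩) (pathSeq a b c d w ⟨i + 2, by omega⟩) := by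
  have hrpos : 0 < r := by linarith
  have hext := fun F' => aux_ext E Lg R F' r hr hrpos.le hb1 hb2
  have hstep : ∀ F' : Finset V, (F'.card : ℝ) ≤ 1e-4 * r → ∀ a b, Lg a b →
      ∃ e, e ∈ R ∧ e ∉ F' ∧ E a b e ∧ Lg b e := by
    intro F' hF' a b hab
    have h := hext F' hF' a b hab
    have : 0 < ((R \ F').filter fun x => E a b x ∧ Lg b x).card := by
      have : (0 : ℝ) < (((R \ F').filter fun x => E a b x ∧ Lg b x).card : ℝ) := by linarith
      exact_mod_cast this
    obtain ⟨e, he⟩ := Finset.card_pos.1 this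
    simp only [mem_filter, mem_sdiff] at he
    exact ⟨e, he.1.1, he.1.2, he.2⟩
  have hins : ∀ (F' : Finset V) (x : V) (t : ℝ), (F'.card : ℝ) + (t + 1) ≤ 1e-4 * r →
      ((insert x F').card : ℝ) + t ≤ 1e-4 * r := by
    intro F' x t h
    have : ((insert x F').card : ℝ) ≤ F'.card + 1 := by
      exact_mod_cast Finset.card_insert_le _ _
    linarith
  have hle : ∀ (F' : Finset V) (t : ℝ), 0 ≤ t → (F'.card : ℝ) + t ≤ 1e-4 * r →
      (F'.card : ℝ) ≤ 1e-4 * r := by intros; linarith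
  obtain ⟨e1, he1R, he1F, he1E, he1L⟩ := hstep F (hle F 30 (by norm_num) hF) a b hab
  have hF1 := hins F e1 29 (by linarith)
  obtain ⟨e2, he2R, he2F, he2E, he2L⟩ := hstep _ (hle _ _ (by norm_num) hF1) b e1 he1L
  have hF2 := hins (insert e1 F) e2 28 (by linarith)
  obtain ⟨e3, he3R, he3F, he3E, he3L⟩ := hstep _ (hle _ _ (by norm_num) hF2) e1 e2 he2L
  have hF3 := hins (insert e2 (insert e1 F)) e3 27 (by linarith)
  obtain ⟨e4, he4R, he4F, he4E, he4L⟩ := hstep _ (hle _ _ (by norm_num) hF3) e2 e3 he3L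
  have hF4 := hins (insert e3 (insert e2 (insert e1 F))) e4 26 (by linarith)
  set F4 := insert e4 (insert e3 (insert e2 (insert e1 F))) with hF4def
  have hSr : ∀ F' : Finset V, ((R \ F').card : ℝ) ≤ r := by
    intro F'
    rw [← hr]
    exact_mod_cast Finset.card_le_card Finset.sdiff_subset
  have hSr2 : ∀ F' : Finset V, (((R \ F') ×ˢ (R \ F')).card : ℝ) ≤ r ^ 2 := by
    intro F'
    rw [Finset.card_product]
    push_cast
    have := hSr F'
    rw [sq]
    gcongr
  have hdens : ∀ F' : Finset V, (F'.card : ℝ) ≤ 1e-4 * r → ∀ x ∈ R,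
      0.799 * r ^ 2 ≤ ((((R \ F') ×ˢ (R \ F')).filter fun z => E x z.1 z.2).card : ℝ) :=
    fun F' hF' x hx => aux_dens R F' (fun p q => E x p q) r hr (by linarith) hF' (hc x hx)
  -- general "first pair" step
  have hpair : ∀ (F' : Finset V), (F'.card : ℝ) ≤ 1e-4 * r → ∀ (X : Finset V) (g : V),
      X ⊆ R → (∀ x ∈ X, Lg g x) → 0.02 * r ≤ (X.card : ℝ) →
      ∃ p q, p ∈ R ∧ p ∉ F' ∧ q ∈ R ∧ q ∉ F' ∧ ∃ X' ⊆ X, 2e-5 * r ≤ (X'.card : ℝ) ∧ ∀ x ∈ X',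
        E g x p ∧ E x p q ∧ 0.64 * r ≤ (((R \ F').filter fun w => E x q w).card : ℝ) := by
    intro F' hF' X g hXR hXg hX
    obtain ⟨⟨p, q⟩, hpq, hpq2⟩ := aux_pigeon X ((R \ F') ×ˢ (R \ F'))
      (fun x z => z.1 ∈ ((R \ F').filter fun p => E g x p) ∧ E x z.1 z.2 ∧
        0.64 * r ≤ (((R \ F').filter fun w => E x z.2 w).card : ℝ)) 0.001 (r ^ 2)
      (by norm_num) (by positivity) (by linarith) (hSr2 F') (by
        intro x hx
        refine aux_G1 (R \ F') ((R \ F').filter fun p => E g x p) (fun p q => E x p q)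
          (fun _ _ => hE2 _ _ _) r hrpos (hSr F') (hdens F' hF' x (hXR hx))
          (Finset.filter_subset _ _) ?_
        have h1 := aux_filter_sdiff R F' (fun p => E g x p)
        have h2 := hb1 g x (hXg x hx)
        linarith)
    simp only [mem_product, mem_sdiff] at hpq
    refine ⟨p, q, hpq.1.1, hpq.1.2, hpq.2.1, hpq.2.2, _, Finset.filter_subset _ _,
      le_trans ?_ hpq2, ?_⟩
    · linarith
    · intro x hx
      have h := (Finset.mem_filter.1 hx).2
      exact ⟨(Finset.mem_filter.1 h.1).2, h.2⟩
  obtain ⟨p, q, hpR, hpF, hqR, hqF, X, hXX, hXc, hX⟩ := hpair F4 (hle _ _ (by norm_num) hF4)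
    ((R \ F4).filter fun x => E e3 e4 x ∧ Lg e4 x) e4
    ((Finset.filter_subset _ _).trans Finset.sdiff_subset)
    (fun x hx => (Finset.mem_filter.1 hx).2.2)
    (hext F4 (hle _ _ (by norm_num) hF4) e3 e4 he4L)
  have hF5 := hins F4 p 25 (by linarith)
  have hF6 := hins (insert p F4) q 24 (by linarith)
  set F6 := insert q (insert p F4) with hF6def
  obtain ⟨t, s, htR, htF, hsR, hsF, Y, hYY, hYc, hY⟩ := hpair F6 (hle _ _ (by norm_num) hF6)
    ((R \ F6).filter fun x => E c d x ∧ Lg d x) d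
    ((Finset.filter_subset _ _).trans Finset.sdiff_subset)
    (fun x hx => (Finset.mem_filter.1 hx).2.2)
    (hext F6 (hle _ _ (by norm_num) hF6) c d hcd)
  have hF7 := hins F6 t 23 (by linarith)
  have hF8 := hins (insert t F6) s 22 (by linarith)
  set F8 := insert s (insert t F6) with hF8def
  have hXm : ∀ x ∈ X, x ∈ R ∧ x ∉ F4 ∧ E e3 e4 x := by
    intro x hx
    have := hXX hx
    simp only [mem_filter, mem_sdiff] at this
    exact ⟨this.1.1, this.1.2, this.2.1⟩
  have hYm : ∀ x ∈ Y, x ∈ R ∧ x ∉ F6 ∧ E c d x := by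
    intro x hx
    have := hYY hx
    simp only [mem_filter, mem_sdiff] at this
    exact ⟨this.1.1, this.1.2, this.2.1⟩
  have hXpos : 0 < (X.card : ℝ) := by linarith
  have hYpos : 0 < (Y.card : ℝ) := by linarith
  have hXdeg : ∀ x ∈ X, 0.639 * r ≤ (((R \ F8).filter fun w => E x q w).card : ℝ) := by
    intro x hx
    have h1 := (hX x hx).2.2
    have h2 := aux_filter_sdiff (R \ F4) {s, t, q, p} (fun w => E x q w)
    have h3 : (R \ F4) \ {s, t, q, p} = R \ F8 := by
      rw [sdiff_sdiff_left, Finset.sup_eq_union, Finset.union_comm]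
      simp only [hF8def, hF6def, Finset.insert_union, Finset.singleton_union]
    rw [h3] at h2
    have h4 : ((({s, t, q, p} : Finset V).card : ℕ) : ℝ) ≤ 4 := by
      exact_mod_cast Finset.card_le_four
    linarith
  have hYdeg : ∀ y ∈ Y, 0.639 * r ≤ (((R \ F8).filter fun w => E y s w).card : ℝ) := by
    intro x hx
    have h1 := (hY x hx).2.2
    have h2 := aux_filter_sdiff (R \ F6) {s, t} (fun w => E x s w)
    have h3 : (R \ F6) \ {s, t} = R \ F8 := by
      rw [sdiff_sdiff_left, Finset.sup_eq_union, Finset.union_comm]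
      simp only [hF8def, Finset.insert_union, Finset.singleton_union]
    rw [h3] at h2
    have h4 : ((({s, t} : Finset V).card : ℕ) : ℝ) ≤ 2 := by
      exact_mod_cast Finset.card_le_two
    linarith
  obtain ⟨⟨u, v⟩, huv, huv2⟩ := aux_pigeon (X ×ˢ Y) ((R \ F8) ×ˢ (R \ F8))
      (fun x z => z.1 ∈ ((R \ F8).filter fun w => E x.1 q w) ∧
        z.2 ∈ ((R \ F8).filter fun w => E x.2 s w) ∧ E x.1 z.1 z.2 ∧ E x.2 z.1 z.2) 0.006 (r ^ 2)
      (by norm_num) (by positivity)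
      (by rw [Finset.card_product]; push_cast; positivity) (hSr2 F8) (by
        rintro ⟨x, y⟩ hxy
        obtain ⟨hx, hy⟩ := Finset.mem_product.1 hxy
        exact aux_G2 (R \ F8) _ _ (fun p q => E x p q) (fun p q => E y p q) r hrpos (hSr F8)
          (hdens F8 (hle _ _ (by norm_num) hF8) x (hXm x hx).1)
          (hdens F8 (hle _ _ (by norm_num) hF8) y (hYm y hy).1)
          (Finset.filter_subset _ _) (hXdeg x hx) (Finset.filter_subset _ _) (hYdeg y hy))
  simp only [mem_product, mem_sdiff] at huv
  obtain ⟨⟨huR, huF⟩, hvR, hvF⟩ := huv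
  set X2 := X.filter fun x => E x q u ∧ E x u v with hX2
  set Y2 := Y.filter fun y => E y s v ∧ E y u v with hY2
  have hXY : 0.006 * ((X.card : ℝ) * Y.card) ≤ X2.card * Y2.card := by
    rw [Finset.card_product] at huv2
    push_cast at huv2
    refine huv2.trans ?_
    have : (X2 ×ˢ Y2).card = X2.card * Y2.card := Finset.card_product _ _
    rw [← Nat.cast_mul, ← this]
    gcongr
    rintro ⟨x, y⟩ h
    simp only [mem_filter, mem_product] at h
    simp only [hX2, hY2, mem_filter, mem_product]
    exact ⟨⟨h.1.1, h.2.1.2, h.2.2.2.1⟩, h.1.2, h.2.2.1.2, h.2.2.2.2⟩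
  have hX2le : (X2.card : ℝ) ≤ X.card := by exact_mod_cast Finset.card_filter_le _ _
  have hY2le : (Y2.card : ℝ) ≤ Y.card := by exact_mod_cast Finset.card_filter_le _ _
  have hX2c : 100 ≤ (X2.card : ℝ) := by
    have h1 : (0.006 * (X.card : ℝ)) * Y.card ≤ X2.card * Y.card := by
      have : (X2.card : ℝ) * Y2.card ≤ X2.card * Y.card := by gcongr
      linarith
    have := le_of_mul_le_mul_right h1 hYpos
    linarith
  have hY2c : 100 ≤ (Y2.card : ℝ) := by
    have h1 : (0.006 * (Y.card : ℝ)) * X.card ≤ Y2.card * X.card := by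
      have : (X2.card : ℝ) * Y2.card ≤ X.card * Y2.card := by gcongr
      linarith
    have := le_of_mul_le_mul_right h1 hXpos
    linarith
  have hpick : ∀ Z : Finset V, 100 ≤ (Z.card : ℝ) → ∀ l : List V, l.length ≤ 20 →
      ∃ z ∈ Z, z ∉ l := by
    intro Z hZ l hl
    obtain ⟨z, hz, hz2⟩ := aux_pick Z l.toFinset (by
      have h1 : l.toFinset.card ≤ 20 := (List.toFinset_card_le l).trans hl
      have h2 : (l.toFinset.card : ℝ) ≤ 20 := by exact_mod_cast h1
      linarith)
    exact ⟨z, hz, by simpa using hz2⟩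
  obtain ⟨x1, hx1, hx1l⟩ := hpick X2 hX2c [p, q, s, t, u, v] (by simp)
  obtain ⟨x2, hx2, hx2l⟩ := hpick X2 hX2c [x1, p, q, s, t, u, v] (by simp)
  obtain ⟨y1, hy1, hy1l⟩ := hpick Y2 hY2c [x2, x1, p, q, s, t, u, v] (by simp)
  obtain ⟨y2, hy2, hy2l⟩ := hpick Y2 hY2c [y1, x2, x1, p, q, s, t, u, v] (by simp)
  obtain ⟨hx1X, hx1a, hx1b⟩ := Finset.mem_filter.1 hx1
  obtain ⟨hx2X, hx2a, hx2b⟩ := Finset.mem_filter.1 hx2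
  obtain ⟨hy1Y, hy1a, hy1b⟩ := Finset.mem_filter.1 hy1
  obtain ⟨hy2Y, hy2a, hy2b⟩ := Finset.mem_filter.1 hy2
  obtain ⟨hx1R, hx1F, hx1E⟩ := hXm x1 hx1X
  obtain ⟨hx2R, hx2F, hx2E⟩ := hXm x2 hx2X
  obtain ⟨hy1R, hy1F, hy1E⟩ := hYm y1 hy1Y
  obtain ⟨hy2R, hy2F, hy2E⟩ := hYm y2 hy2Y
  obtain ⟨hx1p, hx1pq, -⟩ := hX x1 hx1X
  obtain ⟨hx2p, hx2pq, -⟩ := hX x2 hx2X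
  obtain ⟨hy1t, hy1ts, -⟩ := hY y1 hy1Y
  obtain ⟨hy2t, hy2ts, -⟩ := hY y2 hy2Y
  have npq := hE3 _ _ _ hx1pq
  have nts := hE3 _ _ _ hy1ts
  have nuv := hE3 _ _ _ hx1b
  clear hext hstep hins hle hSr hSr2 hdens hpair hpick hX hY hXm hYm hXdeg hYdeg
  simp only [hF8def, hF6def, hF4def, mem_insert, not_or, List.mem_cons, List.not_mem_nil,
    not_false_eq_true, and_true] at *
  refine ⟨![e1, e2, e3, e4, x1, p, q, x2, u, v, y1, s, t, y2], ?_, ?_, ?_⟩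
  · rw [← List.nodup_ofFn]
    simp only [List.ofFn_succ, List.ofFn_zero]
    simp
    grind
  · intro k
    fin_cases k <;> simp [*]
  · intro i hi
    have hi' : i < 16 := by omega
    interval_cases i
    all_goals simp [pathSeq]
    · exact he1E
    · exact he2E
    · exact he3E
    · exact he4E
    · exact hx1E
    · exact hx1p
    · exact hx1pq
    · exact hE2 _ _ _ (hE1 _ _ _ hx2pq)
    · exact hE1 _ _ _ hx2a
    · exact hx2b
    · exact hE2 _ _ _ (hE1 _ _ _ hy1b)
    · exact hE1 _ _ _ (hE2 _ _ _ hy1a)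
    · exact hE2 _ _ _ hy1ts
    · exact hE2 _ _ _ (hE1 _ _ _ (hE2 _ _ _ hy2ts))
    · exact hE2 _ _ _ (hE1 _ _ _ (hE2 _ _ _ hy2t))
    · exact hE1 _ _ _ (hE2 _ _ _ (hE1 _ _ _ hy2E))

lemma aux_link {V : Type} [DecidableEq V] (H : Finset (Finset V)) (hH3 : ∀ e ∈ H, e.card = 3)
    (R : Finset V) (x : V) (hx : x ∈ R) :
    2 * ((H.filter fun e => e ⊆ R).filter fun e => x ∈ e).card ≤
      ((R ×ˢ R).filter fun z => ({x, z.1, z.2} : Finset V) ∈ H).card := by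
  have hmaps : ∀ z ∈ (R ×ˢ R).filter (fun z => ({x, z.1, z.2} : Finset V) ∈ H),
      ({x, z.1, z.2} : Finset V) ∈ (H.filter fun e => e ⊆ R).filter fun e => x ∈ e := by
    intro z hz
    simp only [mem_filter, mem_product] at hz
    simp only [mem_filter]
    refine ⟨⟨hz.2, ?_⟩, by simp⟩
    intro y hy
    simp only [mem_insert, mem_singleton] at hy
    rcases hy with rfl | rfl | rfl
    · exact hx
    · exact hz.1.1
    · exact hz.1.2
  rw [Finset.card_eq_sum_card_fiberwise hmaps, mul_comm, ← smul_eq_mul]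
  apply Finset.card_nsmul_le_sum
  intro e he
  simp only [mem_filter] at he
  obtain ⟨⟨heH, heR⟩, hxe⟩ := he
  have h2 : (e.erase x).card = 2 := by
    rw [Finset.card_erase_of_mem hxe, hH3 e heH]
  obtain ⟨p, q, hpq, he2⟩ := Finset.card_eq_two.1 h2
  have he3 : e = {x, p, q} := by
    rw [← he2, Finset.insert_erase hxe]
  have hp : p ∈ R := heR (by rw [he3]; simp)
  have hq : q ∈ R := heR (by rw [he3]; simp)
  have hsub : ({(p, q), (q, p)} : Finset (V × V)) ⊆
      ((R ×ˢ R).filter (fun z => ({x, z.1, z.2} : Finset V) ∈ H)).filter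
        (fun z => ({x, z.1, z.2} : Finset V) = e) := by
    intro z hz
    simp only [mem_insert, mem_singleton] at hz
    simp only [mem_filter, mem_product]
    rcases hz with rfl | rfl
    · exact ⟨⟨⟨hp, hq⟩, he3 ▸ heH⟩, he3.symm⟩
    · have : ({x, q, p} : Finset V) = e := by rw [he3, Finset.pair_comm]
      exact ⟨⟨⟨hq, hp⟩, this ▸ heH⟩, this⟩
  have h5 := Finset.card_le_card hsub
  rw [Finset.card_pair (by simp [hpq])] at h5
  exact h5

lemma aux_greedy {V : Type} [DecidableEq V] (m : ℕ) (P : Fin m → (Fin 14 → V) → Prop)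
    (h : ∀ i, ∀ F : Finset V, F.card ≤ 14 * m → ∃ w, P i w ∧ ∀ k, w k ∉ F) :
    ∃ W : Fin m → Fin 14 → V, (∀ i, P i (W i)) ∧ ∀ i j, i ≠ j → ∀ k l, W i k ≠ W j l := by
  have key : ∀ s : Finset (Fin m), ∃ W : Fin m → Fin 14 → V, (∀ i ∈ s, P i (W i)) ∧
      ∀ i ∈ s, ∀ j ∈ s, i ≠ j → ∀ k l, W i k ≠ W j l := by
    intro s
    induction s using Finset.induction_on with
    | empty =>
      refine ⟨fun i => (h i ∅ (by simp)).choose, by simp, by simp⟩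
    | insert x s hx ih =>
      obtain ⟨W, hW1, hW2⟩ := ih
      obtain ⟨w, hw1, hw2⟩ := h x (s.biUnion fun i => Finset.univ.image (W i)) (by
        refine Finset.card_biUnion_le.trans ?_
        refine (Finset.sum_le_card_nsmul _ _ 14 ?_).trans ?_
        · intro i _
          exact Finset.card_image_le.trans (by simp)
        · rw [smul_eq_mul, mul_comm]
          have := Finset.card_le_univ s
          simp at this
          omega)
      simp only [mem_biUnion, mem_image, mem_univ, true_and, not_exists, not_and] at hw2
      have hWs : ∀ i ∈ s, Function.update W x w i = W i := by
        intro i hi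
        exact Function.update_of_ne (by rintro rfl; exact hx hi) _ _
      refine ⟨Function.update W x w, ?_, ?_⟩
      · intro i hi
        rcases Finset.mem_insert.1 hi with rfl | hi
        · simpa using hw1
        · rw [hWs i hi]; exact hW1 i hi
      · intro i hi j hj hij k l
        rcases Finset.mem_insert.1 hi with hi1 | hi1 <;>
          rcases Finset.mem_insert.1 hj with hj1 | hj1
        · exact absurd (hi1.trans hj1.symm) hij
        · rw [hWs j hj1, hi1, Function.update_self]
          exact fun he => hw2 k j hj1 l he.symm
        · rw [hWs i hi1, hj1, Function.update_self]
          exact hw2 l i hi1 k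
        · rw [hWs i hi1, hWs j hj1]
          exact hW2 i hi1 j hj1 hij k l
  obtain ⟨W, h1, h2⟩ := key Finset.univ
  exact ⟨W, fun i => h1 i (mem_univ _), fun i j => h2 i (mem_univ _) j (mem_univ _)⟩

/-- For `0 < γ ≤ 10⁻⁶/3` and large `n`: if `H` is a 3-graph on `n` vertices with minimum
vertex degree at least `0.8·C(n-1,2)` and `R` is a reservoir set satisfying (a)-(c) of
Claim 10, then any `m ≤ γ³n + 1` pairwise disjoint `(1/3)`-large ordered pairs
`e_1,…,e_m` and `f_1,…,f_m` outside `R` can be simultaneously connected by pairwise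
vertex-disjoint tight paths of length 16 with all inner vertices in `R`. -/
theorem stmt_19 (γ : ℝ) (hγ0 : 0 < γ) (hγ1 : γ ≤ 1 / 3000000) :
    ∃ n₀ : ℕ, ∀ n : ℕ, n₀ ≤ n →
    ∀ (V : Type) [DecidableEq V] [Fintype V], Fintype.card V = n →
    ∀ H : Finset (Finset V), (∀ e ∈ H, e.card = 3) →
    (∀ v : V, (0.8 : ℝ) * ((n - 1).choose 2 : ℝ) ≤
      ((H.filter fun e => v ∈ e).card : ℝ)) →
    ∀ R : Finset V,
      (γ ^ 2 * n / 4 ≤ (R.card : ℝ) ∧ (R.card : ℝ) ≤ γ ^ 2 * n / 2) →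
      (∀ u v : V, u ≠ v → (1 / 3 : ℝ) * ((n : ℝ) - 2) ≤ (coDeg H u v : ℝ) →
        (0.333 : ℝ) * (R.card : ℝ) ≤
          ((R.filter fun w => ({u, v, w} : Finset V) ∈ H).card : ℝ)) →
      (∀ v : V, (0.697 : ℝ) * (R.card : ℝ) ≤
        ((R.filter fun w =>
          w ≠ v ∧ (1 / 3 : ℝ) * ((n : ℝ) - 2) ≤ (coDeg H v w : ℝ)).card : ℝ)) →
      (∀ v ∈ R, (0.7994 : ℝ) * (R.card.choose 2 : ℝ) ≤
        (((H.filter fun e => e ⊆ R).filter fun e => v ∈ e).card : ℝ)) →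
      ∀ m : ℕ, (m : ℝ) ≤ γ ^ 3 * n + 1 →
      ∀ a b c d : Fin m → V,
        Function.Injective (fun x : Fin m × Fin 4 => ![a, b, c, d] x.2 x.1) →
        (∀ i, a i ∉ R ∧ b i ∉ R ∧ c i ∉ R ∧ d i ∉ R) →
        (∀ i, (1 / 3 : ℝ) * ((n : ℝ) - 2) ≤ (coDeg H (a i) (b i) : ℝ)) →
        (∀ i, (1 / 3 : ℝ) * ((n : ℝ) - 2) ≤ (coDeg H (c i) (d i) : ℝ)) →
        ∃ Pa : Fin m → Fin 18 → V,
          (∀ i, IsTightPath H (Pa i)) ∧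
          (∀ i, Pa i 0 = a i ∧ Pa i 1 = b i ∧ Pa i 17 = c i ∧ Pa i 16 = d i) ∧
          (∀ i, ∀ k : Fin 18, 2 ≤ (k : ℕ) → (k : ℕ) ≤ 15 → Pa i k ∈ R) ∧
          (∀ i j, i ≠ j → ∀ k l : Fin 18, Pa i k ≠ Pa j l) := by
  obtain ⟨n₀, hn₀⟩ := exists_nat_ge (4 * 10 ^ 9 / γ ^ 2)
  refine ⟨n₀, ?_⟩
  intro n hn V _ _ hV H hH3 _ R hRa hb1 hb2 hc m hm a b c d hinj hout hab hcd
  have hn' : 4 * 10 ^ 9 / γ ^ 2 ≤ (n : ℝ) := hn₀.trans (by exact_mod_cast hn)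
  rw [div_le_iff₀ (by positivity)] at hn'
  have hr0 : (10 : ℝ) ^ 9 ≤ (R.card : ℝ) := by linarith [hRa.1]
  have hm14 : (14 : ℝ) * m + 30 ≤ 1e-4 * R.card := by
    have h1 : γ ^ 3 * n = γ * (γ ^ 2 * n) := by ring
    have h2 : γ * (γ ^ 2 * n) ≤ (1 / 3000000) * (γ ^ 2 * n) := by gcongr
    linarith [hRa.1]
  have hne : ∀ i, a i ≠ b i ∧ c i ≠ d i := by
    intro i
    constructor
    · intro h
      have := @hinj (i, 0) (i, 1) (by simpa using h)
      simp at this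
    · intro h
      have := @hinj (i, 2) (i, 3) (by simpa using h)
      simp at this
  have hcomm : ∀ u v, coDeg H u v = coDeg H v u := by
    intro u v
    unfold coDeg
    congr 1
    ext e
    simp only [mem_filter]
    tauto
  have hW := aux_greedy m (fun i w => Function.Injective w ∧ (∀ k, w k ∈ R) ∧
      ∀ (j : ℕ) (hj : j + 2 < 18), ({pathSeq (a i) (b i) (c i) (d i) w ⟨j, by omega⟩,
        pathSeq (a i) (b i) (c i) (d i) w ⟨j + 1, by omega⟩,
        pathSeq (a i) (b i) (c i) (d i) w ⟨j + 2, by omega⟩} : Finset V) ∈ H) (by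
    intro i F hF
    have hF' : (F.card : ℝ) ≤ 14 * m := by exact_mod_cast hF
    obtain ⟨w, hw1, hw2, hw3⟩ := aux_core (fun x y z => ({x, y, z} : Finset V) ∈ H)
      (fun u v => u ≠ v ∧ (1 / 3 : ℝ) * ((n : ℝ) - 2) ≤ (coDeg H u v : ℝ))
      (fun x y z h => by rwa [Finset.insert_comm])
      (fun x y z h => by rwa [Finset.pair_comm])
      (fun x y z h => by
        rintro rfl
        have h1 := hH3 _ h
        have h2 := Finset.card_le_two (a := x) (b := y)
        simp only [Finset.mem_singleton, Finset.insert_eq_of_mem] at h1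
        omega)
      R F R.card rfl hr0
      (fun u v h => by convert hb1 u v h.1 h.2)
      (fun v => by
        convert hb2 v using 4
        simp only [ne_comm])
      (fun x hx => by
        have h1 := hc x hx
        have h2 := aux_link H hH3 R x hx
        have h3 : (2 : ℝ) * (((H.filter fun e => e ⊆ R).filter fun e => x ∈ e).card : ℝ) ≤
          (((R ×ˢ R).filter fun z => ({x, z.1, z.2} : Finset V) ∈ H).card : ℝ) := by
            exact_mod_cast h2
        rw [Nat.cast_choose_two] at h1
        refine le_trans ?_ (h3.trans (le_of_eq (by congr)))
        linarith)
      (by linarith) (a i) (b i) (c i) (d i) ⟨(hne i).1, hab i⟩ ⟨(hne i).2, hcd i⟩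
    exact ⟨w, ⟨hw1, fun k => (hw2 k).1, hw3⟩, fun k => (hw2 k).2⟩)
  obtain ⟨W, hW1, hW2⟩ := hW
  let φ : Fin 18 → Fin 14 ⊕ Fin 4 := ![.inr 0, .inr 1, .inl 0, .inl 1, .inl 2, .inl 3, .inl 4,
    .inl 5, .inl 6, .inl 7, .inl 8, .inl 9, .inl 10, .inl 11, .inl 12, .inl 13, .inr 3, .inr 2]
  have hφ : Function.Injective φ := by decide
  let Φ : Fin m → Fin 14 ⊕ Fin 4 → V := fun i z =>
    Sum.elim (W i) (fun j => ![a, b, c, d] j i) z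
  have hP : ∀ i k, pathSeq (a i) (b i) (c i) (d i) (W i) k = Φ i (φ k) := by
    intro i k
    fin_cases k <;> rfl
  have hend : ∀ i j, ![a, b, c, d] j i ∉ R := by
    intro i j
    obtain ⟨h1, h2, h3, h4⟩ := hout i
    fin_cases j
    · exact h1
    · exact h2
    · exact h3
    · exact h4
  have hΦ : ∀ i j y z, Φ i y = Φ j z → i = j ∧ y = z := by
    intro i j y z h
    rcases y with y | y <;> rcases z with z | z <;> simp only [Φ, Sum.elim_inl, Sum.elim_inr] at h
    · by_cases hij : i = j
      · subst hij
        exact ⟨rfl, by rw [(hW1 i).1 h]⟩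
      · exact absurd h (hW2 i j hij y z)
    · exact absurd (h ▸ (hW1 i).2.1 y) (hend j z)
    · exact absurd (h ▸ (hW1 j).2.1 z) (hend i y)
    · have := @hinj (i, y) (j, z) h
      simp only [Prod.mk.injEq] at this
      exact ⟨this.1, by rw [this.2]⟩
  refine ⟨fun i => pathSeq (a i) (b i) (c i) (d i) (W i), ?_, ?_, ?_, ?_⟩
  · intro i
    refine ⟨?_, (hW1 i).2.2⟩
    intro k l h
    simp only [hP] at h
    exact hφ (hΦ _ _ _ _ h).2
  · intro i
    exact ⟨rfl, rfl, rfl, rfl⟩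
  · intro i k hk1 hk2
    have h := (hW1 i).2.1
    fin_cases k
    any_goals exact h _
    all_goals (simp at hk1 hk2)
  · intro i j hij k l h
    simp only [hP] at h
    exact hij (hΦ _ _ _ _ h).1
end
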